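/- Let n ≥ 2, 2 ≤ p ≤ ∞ and α ≥ 0. Let γ : I → ℝⁿ be a smooth, injective, regular, non-degenerate curve on a compact interval I, and let χ ∈ C_c^∞(ℝ) be nonnegative, not identically zero, and supported in the interior of I. If there exists a constant C such that ‖A_γ f‖_{L^p_α(ℝⁿ)} ≤ C ‖f‖_{L^p(ℝⁿ)} for every Schwartz function f, then α ≤ min{(1/n)(1/2 + 1/p), 1/p}. -/

import Mathlib

open MeasureTheory Set
open scoped FourierTransform RealInnerProductSpace ENNReal

noncomputable section

/-- Euclidean space ℝⁿ. -/
abbrev Euc (n : ℕ) := EuclideanSpace ℝ (Fin n)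

/-- The averaging operator `A_γ f (x) = ∫ f(x - γ(s)) χ(s) ds`. -/
def avgOp {n : ℕ} (γ : ℝ → Euc n) (χ : ℝ → ℝ) (f : Euc n → ℂ) : Euc n → ℂ :=
  fun x => ∫ s : ℝ, f (x - γ s) * (χ s : ℂ)

/-- The `L^p` Sobolev norm `‖𝓕⁻¹[(1+|ξ|²)^{α/2} 𝓕 g]‖_{L^p}` of order `α`. -/
def sobolevNorm {n : ℕ} (p : ℝ≥0∞) (α : ℝ) (g : Euc n → ℂ) : ℝ≥0∞ :=
  eLpNorm (𝓕⁻ (fun ξ : Euc n => (((1 + ‖ξ‖ ^ 2) ^ (α / 2) : ℝ) : ℂ) * 𝓕 g ξ)) p volume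

/-- Non-degeneracy: `|det(γ'(s), …, γ⁽ⁿ⁾(s))| ≥ c₀ > 0` on `I`. -/
def NonDeg {n : ℕ} (γ : ℝ → Euc n) (I : Set ℝ) : Prop :=
  ∃ c₀ > (0 : ℝ), ∀ s ∈ I,
    c₀ ≤ |(Matrix.of fun i j : Fin n => iteratedDeriv ((j : ℕ) + 1) γ s i).det|

/-- the character `e^{2πiθ}` -/
def ec (θ : ℝ) : ℂ := Complex.exp (((2 * Real.pi * θ : ℝ) : ℂ) * Complex.I)

lemma ec_add (x y : ℝ) : ec (x + y) = ec x * ec y := by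
  unfold ec; rw [← Complex.exp_add]; congr 1; push_cast; ring

lemma ec_zero : ec 0 = 1 := by simp [ec]

lemma norm_ec (x : ℝ) : ‖ec x‖ = 1 := by
  unfold ec; exact Complex.norm_exp_ofReal_mul_I _

lemma continuous_ec : Continuous ec := by unfold ec; fun_prop

lemma conj_ec (x : ℝ) : (starRingEnd ℂ) (ec x) = ec (-x) := by
  unfold ec
  rw [← Complex.exp_conj, map_mul, Complex.conj_ofReal, Complex.conj_I]
  congr 1
  push_cast; ring

lemma re_ec (x : ℝ) : (ec x).re = Real.cos (2 * Real.pi * x) := by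
  unfold ec; rw [Complex.exp_ofReal_mul_I_re]

lemma exp_poly_bound (b : ℝ) (hb : 0 < b) (j : ℕ) :
    ∃ C : ℝ, 0 ≤ C ∧ ∀ r : ℝ, 0 ≤ r → (1 + r) ^ j * Real.exp (-(b * r ^ 2)) ≤ C := by
  have h1 : ∀ r : ℝ, 0 ≤ r → (1 + r) ^ j ≤ 4 ^ j * (1 + r ^ 2) ^ j := by
    intro r hr
    rw [← mul_pow]
    apply pow_le_pow_left₀ (by positivity)
    nlinarith [sq_nonneg (r - 1)]
  refine ⟨4 ^ j * (j.factorial * (1 / b) ^ j * Real.exp b), by positivity, fun r hr => ?_⟩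
  have h2 := Real.pow_div_factorial_le_exp (x := b * (1 + r ^ 2)) (by positivity) j
  rw [div_le_iff₀ (by positivity), mul_pow] at h2
  have h3 : (1 + r ^ 2) ^ j ≤ (1 / b) ^ j * (Real.exp (b * (1 + r ^ 2)) * j.factorial) := by
    calc (1 + r ^ 2) ^ j = (1 / b) ^ j * (b ^ j * (1 + r ^ 2) ^ j) := by
          rw [← mul_assoc, ← mul_pow]; field_simp; simp
      _ ≤ _ := by gcongr
  calc (1 + r) ^ j * Real.exp (-(b * r ^ 2))
      ≤ 4 ^ j * ((1 / b) ^ j * (Real.exp (b * (1 + r ^ 2)) * j.factorial)) *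
        Real.exp (-(b * r ^ 2)) := by
          gcongr
          exact (h1 r hr).trans (by gcongr)
    _ = 4 ^ j * ((1 / b) ^ j * j.factorial) * (Real.exp (b * (1 + r ^ 2)) *
        Real.exp (-(b * r ^ 2))) := by ring
    _ = _ := by rw [← Real.exp_add]; ring_nf

lemma gaussian_schwartz {n : ℕ} (b : ℝ) (hb : 0 < b) :
    ∃ g : SchwartzMap (Euc n) ℝ, ∀ x, g x = Real.exp (-(b * ‖x‖ ^ 2)) := by
  have hf : (fun x : Euc n => ‖x‖ ^ 2).HasTemperateGrowth := by fun_prop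
  have hfc : ContDiff ℝ (⊤ : ℕ∞) (fun x : Euc n => ‖x‖ ^ 2) := hf.1
  have hgc : ContDiff ℝ (⊤ : ℕ∞) (fun u : ℝ => Real.exp ((-b) * u)) := by fun_prop
  refine ⟨⟨fun x => Real.exp (-(b * ‖x‖ ^ 2)), ?_, ?_⟩, fun x => rfl⟩
  · fun_prop
  intro k m
  obtain ⟨j, C, hC, hj⟩ := hf.norm_iteratedFDeriv_le_uniform m
  obtain ⟨B, hB0, hB⟩ := exp_poly_bound b hb (k + j * m)
  refine ⟨m.factorial * (1 + b) ^ m * (1 + C) ^ m * B, fun x => ?_⟩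
  have key := norm_iteratedFDeriv_comp_le (𝕜 := ℝ) (g := fun u : ℝ => Real.exp ((-b) * u))
    (f := fun x : Euc n => ‖x‖ ^ 2) (n := m) hgc hfc
    (by exact_mod_cast le_top) x
    (C := (1 + b) ^ m * Real.exp (-(b * ‖x‖ ^ 2))) (D := (1 + C) * (1 + ‖x‖) ^ j)
    (by
      intro i hi
      rw [norm_iteratedFDeriv_eq_norm_iteratedDeriv, iteratedDeriv_exp_const_mul]
      simp only [norm_mul, norm_pow, norm_neg, Real.norm_eq_abs, Real.abs_exp, abs_of_pos hb]
      rw [neg_mul]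
      gcongr
      calc b ^ i ≤ (1 + b) ^ i := by gcongr; linarith
        _ ≤ (1 + b) ^ m := by apply pow_le_pow_right₀ _ hi; linarith)
    (by
      intro i hi him
      have h1 : 1 ≤ (1 + C) * (1 + ‖x‖) ^ j := by
        have : 1 ≤ (1 + ‖x‖) ^ j := one_le_pow₀ (by linarith [norm_nonneg x])
        nlinarith
      calc _ ≤ C * (1 + ‖x‖) ^ j := hj i him x
        _ ≤ (1 + C) * (1 + ‖x‖) ^ j := by gcongr; linarith
        _ ≤ _ := le_self_pow₀ h1 (by omega))
  have e1 : ((fun u : ℝ => Real.exp ((-b) * u)) ∘ (fun x : Euc n => ‖x‖ ^ 2)) =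
      fun x => Real.exp (-(b * ‖x‖ ^ 2)) := by
    ext y; simp
  rw [e1] at key
  calc ‖x‖ ^ k * _ ≤ (1 + ‖x‖) ^ k * (m.factorial * ((1 + b) ^ m * Real.exp (-(b * ‖x‖ ^ 2))) *
        ((1 + C) * (1 + ‖x‖) ^ j) ^ m) := by
        gcongr
        linarith
    _ = m.factorial * (1 + b) ^ m * (1 + C) ^ m * ((1 + ‖x‖) ^ (k + j * m) *
        Real.exp (-(b * ‖x‖ ^ 2))) := by rw [mul_pow]; ring
    _ ≤ _ := by
        gcongr
        exact hB _ (norm_nonneg x)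

lemma ec_temperate : ec.HasTemperateGrowth := by
  have hcd : ContDiff ℝ (⊤ : ℕ∞) ec := by
    unfold ec
    exact ((Complex.ofRealCLM.contDiff.comp (by fun_prop : ContDiff ℝ (⊤ : ℕ∞)
      (fun t : ℝ => 2 * Real.pi * t))).mul contDiff_const).cexp
  refine ⟨hcd, fun m => ⟨0, (2 * Real.pi) ^ m, fun x => ?_⟩⟩
  have : ec = fun t : ℝ => (fun z : ℂ => Complex.exp ((2 * Real.pi * Complex.I) * z)) (t : ℂ) := by
    ext t; unfold ec; congr 1; push_cast; ring
  have h2 : ∀ m : ℕ, iteratedDeriv m ec = fun t => (2 * Real.pi * Complex.I) ^ m * ec t := by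
    intro m
    induction m with
    | zero => simp
    | succ m ih =>
      rw [iteratedDeriv_succ, ih]
      ext t
      have hd : HasDerivAt ec (2 * Real.pi * Complex.I * ec t) t := by
        have h3 : HasDerivAt (fun t : ℝ => ((2 * Real.pi * t : ℝ) : ℂ) * Complex.I)
            (((2 * Real.pi * 1 : ℝ) : ℂ) * Complex.I) t :=
          (HasDerivAt.ofReal_comp ((hasDerivAt_id t).const_mul (2 * Real.pi))).mul_const _
        have h4 := h3.cexp
        have e : 2 * Real.pi * Complex.I * ec t = Complex.exp (((2 * Real.pi * t : ℝ) : ℂ) *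
            Complex.I) * (((2 * Real.pi * 1 : ℝ) : ℂ) * Complex.I) := by
          rw [ec]; push_cast; ring
        rw [e]; exact h4
      rw [(hd.const_mul _).deriv]
      ring
  rw [norm_iteratedFDeriv_eq_norm_iteratedDeriv, h2]
  simp [norm_ec, abs_of_pos Real.pi_pos]

/-- wave packets -/
def wp {n : ℕ} (N : ℝ) (ξ y : Euc n) (x : Euc n) : ℂ :=
  ec ⟪ξ, x + y⟫ * ((N ^ n * Real.exp (-(Real.pi * N ^ 2 * ‖x + y‖ ^ 2)) : ℝ) : ℂ)

lemma wp_schwartz {n : ℕ} (N : ℝ) (hN : 0 < N) (ξ y : Euc n) :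
    ∃ g : SchwartzMap (Euc n) ℂ, ∀ x, g x = wp N ξ y x := by
  obtain ⟨g, hg⟩ := gaussian_schwartz (n := n) (Real.pi * N ^ 2) (by positivity)
  have ht : (fun x : Euc n => ec ⟪ξ, x⟫ * ((N ^ n : ℝ) : ℂ)).HasTemperateGrowth := by
    have h1 : (fun x : Euc n => ec ⟪ξ, x⟫).HasTemperateGrowth :=
      ec_temperate.comp (f := fun x : Euc n => ⟪ξ, x⟫) (by fun_prop)
    exact h1.mul (Function.HasTemperateGrowth.const _)
  let g2 : SchwartzMap (Euc n) ℂ := SchwartzMap.postcompCLM Complex.ofRealCLM g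
  refine ⟨SchwartzMap.compSubConstCLM ℂ (-y) (SchwartzMap.smulLeftCLM ℂ
    (fun x : Euc n => ec ⟪ξ, x⟫ * ((N ^ n : ℝ) : ℂ)) g2), fun x => ?_⟩
  rw [SchwartzMap.compSubConstCLM_apply, SchwartzMap.smulLeftCLM_apply_apply ht]
  simp only [g2, SchwartzMap.postcompCLM_apply, hg, wp, sub_neg_eq_add]
  simp [mul_assoc]

lemma gauss_integrable {n : ℕ} (b : ℝ) (hb : 0 < b) (j : ℕ) (ξ₀ : Euc n) :
    Integrable (fun ξ : Euc n => (1 + ‖ξ - ξ₀‖) ^ j * Real.exp (-(b * ‖ξ - ξ₀‖ ^ 2))) := by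
  have h : Integrable (fun ξ : Euc n => (1 + ‖ξ‖) ^ j * Real.exp (-(b * ‖ξ‖ ^ 2))) := by
    obtain ⟨g, hg⟩ := gaussian_schwartz (n := n) (b / 2) (by positivity)
    obtain ⟨C, hC, hj⟩ := exp_poly_bound (b / 2) (by positivity) j
    refine Integrable.mono' (g.integrable.const_mul C)
      (by apply Continuous.aestronglyMeasurable; fun_prop) (Filter.Eventually.of_forall fun x => ?_)
    rw [Real.norm_of_nonneg (by positivity), hg]
    calc _ = ((1 + ‖x‖) ^ j * Real.exp (-(b / 2 * ‖x‖ ^ 2))) * Real.exp (-(b / 2 * ‖x‖ ^ 2)) := by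
          rw [mul_assoc, ← Real.exp_add]; ring_nf
      _ ≤ _ := by gcongr; exact hj _ (norm_nonneg x)
  exact h.comp_sub_right ξ₀

/-- Gaussian Fourier integral. -/
lemma gauss_fourier {n : ℕ} (b : ℝ) (hb : 0 < b) (ξ₀ y : Euc n) :
    ∫ ξ : Euc n, ec (-⟪y, ξ⟫) * ((Real.exp (-(b * ‖ξ - ξ₀‖ ^ 2)) : ℝ) : ℂ) =
      ec (-⟪y, ξ₀⟫) * (((Real.pi / b) ^ ((n : ℝ) / 2) *
        Real.exp (-(Real.pi ^ 2 * ‖y‖ ^ 2 / b)) : ℝ) : ℂ) := by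
  have h0 : ∫ ξ : Euc n, ec (-⟪y, ξ⟫) * ((Real.exp (-(b * ‖ξ - ξ₀‖ ^ 2)) : ℝ) : ℂ) =
      ∫ ξ : Euc n, ec (-⟪y, ξ + ξ₀⟫) * ((Real.exp (-(b * ‖ξ‖ ^ 2)) : ℝ) : ℂ) := by
    rw [← integral_add_right_eq_self _ ξ₀]
    simp
  rw [h0]
  have h1 := fourier_gaussian_innerProductSpace (V := Euc n) (b := (b : ℂ)) (by simpa using hb) y
  rw [Real.fourier_eq'] at h1
  have h2 : ∀ ξ : Euc n, ec (-⟪y, ξ + ξ₀⟫) * ((Real.exp (-(b * ‖ξ‖ ^ 2)) : ℝ) : ℂ) =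
      ec (-⟪y, ξ₀⟫) * (Complex.exp (↑(-2 * Real.pi * ⟪ξ, y⟫) * Complex.I) •
        Complex.exp (-(b : ℂ) * (‖ξ‖ : ℂ) ^ 2)) := by
    intro ξ
    rw [inner_add_right, neg_add, ec_add, mul_comm (ec _) (ec _), mul_assoc]
    congr 1
    rw [smul_eq_mul, ec, real_inner_comm]
    push_cast
    congr 1 <;> congr 1 <;> ring
  simp_rw [h2]
  rw [integral_const_mul, h1]
  congr 1
  push_cast
  congr 1
  · rw [Complex.ofReal_cpow (by positivity)]
    simp
  · congr 1; ring

/-- frequency Gaussian -/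
def Gw {n : ℕ} (N : ℝ) (η ξ : Euc n) : ℝ := Real.exp (-(Real.pi / N ^ 2 * ‖ξ - η‖ ^ 2))

/-- the Fourier multiplier of the average -/
def mm {n : ℕ} (γ : ℝ → Euc n) (χ : ℝ → ℝ) (ξ : Euc n) : ℂ :=
  ∫ s : ℝ, ec (-⟪γ s, ξ⟫) * (χ s : ℂ)

/-- the Bessel weight -/
def ww {n : ℕ} (α : ℝ) (ξ : Euc n) : ℝ := (1 + ‖ξ‖ ^ 2) ^ (α / 2)

lemma fourier_ec {n : ℕ} (f : Euc n → ℂ) (ξ : Euc n) :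
    𝓕 f ξ = ∫ x, ec (-⟪x, ξ⟫) * f x := by
  rw [Real.fourier_eq']
  congr 1; ext x
  rw [ec, smul_eq_mul]
  congr 3; ring

lemma gauss_norm {n : ℕ} (N : ℝ) (hN : 0 < N) :
    N ^ n * (Real.pi / (Real.pi * N ^ 2)) ^ ((n : ℝ) / 2) = 1 := by
  have h1 : Real.pi / (Real.pi * N ^ 2) = (N⁻¹) ^ 2 := by
    have := Real.pi_ne_zero
    field_simp
  rw [h1, ← Real.rpow_natCast (N⁻¹) 2, ← Real.rpow_mul (by positivity)]
  have : ((2 : ℕ) : ℝ) * ((n : ℝ) / 2) = n := by push_cast; ring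
  rw [this, Real.rpow_natCast, ← mul_pow, mul_inv_cancel₀ hN.ne', one_pow]

lemma gauss_packet {n : ℕ} (N : ℝ) (hN : 0 < N) (ξ₀ ξ : Euc n) :
    ∫ x : Euc n, ec (-⟪ξ - ξ₀, x⟫) * ((N ^ n * Real.exp (-(Real.pi * N ^ 2 * ‖x‖ ^ 2)) : ℝ) : ℂ)
      = (Gw N ξ₀ ξ : ℂ) := by
  have h := gauss_fourier (n := n) (Real.pi * N ^ 2) (by positivity) 0 (ξ - ξ₀)
  simp only [sub_zero, inner_zero_right, neg_zero, ec_zero, one_mul] at h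
  have h2 : ∀ x : Euc n, ec (-⟪ξ - ξ₀, x⟫) *
      ((N ^ n * Real.exp (-(Real.pi * N ^ 2 * ‖x‖ ^ 2)) : ℝ) : ℂ) = ((N ^ n : ℝ) : ℂ) *
      (ec (-⟪ξ - ξ₀, x⟫) * ((Real.exp (-(Real.pi * N ^ 2 * ‖x‖ ^ 2)) : ℝ) : ℂ)) := by
    intro x; push_cast; ring
  simp_rw [h2]
  rw [integral_const_mul, h, ← Complex.ofReal_mul, ← mul_assoc, gauss_norm N hN, one_mul, Gw]
  congr 3
  have := Real.pi_ne_zero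
  field_simp

lemma wp_fourier {n : ℕ} (N : ℝ) (hN : 0 < N) (ξ₀ y ξ : Euc n) :
    𝓕 (wp N ξ₀ y) ξ = ec ⟪y, ξ⟫ * (Gw N ξ₀ ξ : ℂ) := by
  rw [fourier_ec, ← integral_sub_right_eq_self _ y, ← gauss_packet N hN, ← integral_const_mul]
  congr 1; ext x
  simp only [wp, sub_add_cancel]
  rw [← mul_assoc, ← mul_assoc, ← ec_add, ← ec_add]
  congr 2
  simp only [inner_sub_left, real_inner_comm]
  ring

lemma gauss_packet_integrable {n : ℕ} (N : ℝ) (hN : 0 < N) :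
    Integrable (fun x : Euc n => N ^ n * Real.exp (-(Real.pi * N ^ 2 * ‖x‖ ^ 2))) := by
  have := gauss_integrable (n := n) (Real.pi * N ^ 2) (by positivity) 0 0
  simp only [pow_zero, one_mul, sub_zero] at this
  exact this.const_mul _

lemma gauss_packet_integral {n : ℕ} (N : ℝ) (hN : 0 < N) :
    ∫ x : Euc n, N ^ n * Real.exp (-(Real.pi * N ^ 2 * ‖x‖ ^ 2)) = 1 := by
  have h := gauss_packet (n := n) N hN 0 0
  simp only [sub_zero, inner_zero_left, neg_zero, ec_zero, one_mul] at h
  rw [integral_complex_ofReal] at h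
  have : (Gw N (0 : Euc n) 0) = 1 := by simp [Gw]
  rw [this] at h
  exact_mod_cast h

lemma pairing_one {n : ℕ} (N : ℝ) (hN : 0 < N) (F : Euc n → ℂ) (hF : Integrable F) (η : Euc n) :
    ∫ x, 𝓕⁻ F x * (ec (-⟪η, x⟫) * ((N ^ n * Real.exp (-(Real.pi * N ^ 2 * ‖x‖ ^ 2)) : ℝ) : ℂ)) =
      ∫ ξ, F ξ * (Gw N η ξ : ℂ) := by
  set g : Euc n → ℂ := fun x =>
    ec (-⟪η, x⟫) * ((N ^ n * Real.exp (-(Real.pi * N ^ 2 * ‖x‖ ^ 2)) : ℝ) : ℂ) with hgdef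
  have hg : Integrable g := by
    refine (gauss_packet_integrable (n := n) N hN).mono' ?_ ?_
    · apply Continuous.aestronglyMeasurable
      have := continuous_ec
      fun_prop
    · refine Filter.Eventually.of_forall fun x => ?_
      simp only [hgdef, norm_mul, norm_ec, one_mul, Complex.norm_real]
      rw [← norm_mul, Real.norm_of_nonneg (by positivity)]
  have hL : Continuous fun q : Euc n × Euc n => (-innerₗ (Euc n)) q.1 q.2 := by
    simp only [LinearMap.neg_apply, innerₗ_apply_apply]
    fun_prop
  have key := VectorFourier.integral_fourierIntegral_smul_eq_flip (e := Real.fourierChar)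
    (μ := (volume : Measure (Euc n))) (ν := (volume : Measure (Euc n)))
    (L := -innerₗ (Euc n)) Real.continuous_fourierChar hL hF hg
  simp only [smul_eq_mul] at key
  refine Eq.trans ?_ (key.trans ?_)
  · rfl
  · congr 1; ext ξ
    congr 1
    rw [← gauss_packet N hN η ξ, VectorFourier.fourierIntegral]
    have e1 : ∫ x : Euc n, ec (-⟪ξ - η, x⟫) *
        ((N ^ n * Real.exp (-(Real.pi * N ^ 2 * ‖x‖ ^ 2)) : ℝ) : ℂ) =
        ∫ x : Euc n, ec ⟪ξ - η, x⟫ *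
        ((N ^ n * Real.exp (-(Real.pi * N ^ 2 * ‖x‖ ^ 2)) : ℝ) : ℂ) := by
      rw [← integral_neg_eq_self]
      simp
    rw [e1]
    congr 1; ext x
    have e2 : -(((-innerₗ (Euc n)).flip x) ξ) = ⟪ξ, x⟫ := by
      simp [LinearMap.flip_apply]
    rw [e2, Circle.smul_def, Real.fourierChar_apply, smul_eq_mul, hgdef]
    rw [← mul_assoc, inner_sub_left, sub_eq_add_neg, ec_add]
    rfl

lemma continuous_fourierInv_of_integrable {n : ℕ} (F : Euc n → ℂ) (hF : Integrable F) :
    Continuous (𝓕⁻ F) := by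
  have hL : Continuous fun q : Euc n × Euc n => (-innerₗ (Euc n)) q.1 q.2 := by
    simp only [LinearMap.neg_apply, innerₗ_apply_apply]
    fun_prop
  exact VectorFourier.fourierIntegral_continuous Real.continuous_fourierChar hL hF

lemma norm_fourierInv_le {n : ℕ} (F : Euc n → ℂ) (x : Euc n) :
    ‖𝓕⁻ F x‖ ≤ ∫ ξ, ‖F ξ‖ :=
  VectorFourier.norm_fourierIntegral_le_integral_norm _ _ _ _ _

lemma pairing_sum {n : ℕ} (N : ℝ) (hN : 0 < N) (F : Euc n → ℂ) (hF : Integrable F)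
    (M : ℕ) (η : ℕ → Euc n) :
    ∫ x, (𝓕⁻ F x * ∑ μ ∈ Finset.range M, ec (-⟪η μ, x⟫)) *
        ((N ^ n * Real.exp (-(Real.pi * N ^ 2 * ‖x‖ ^ 2)) : ℝ) : ℂ) =
      ∑ μ ∈ Finset.range M, ∫ ξ, F ξ * (Gw N (η μ) ξ : ℂ) := by
  have hFc := continuous_fourierInv_of_integrable F hF
  have h1 : ∀ x, (𝓕⁻ F x * ∑ μ ∈ Finset.range M, ec (-⟪η μ, x⟫)) *
        ((N ^ n * Real.exp (-(Real.pi * N ^ 2 * ‖x‖ ^ 2)) : ℝ) : ℂ) =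
      ∑ μ ∈ Finset.range M, 𝓕⁻ F x * (ec (-⟪η μ, x⟫) *
        ((N ^ n * Real.exp (-(Real.pi * N ^ 2 * ‖x‖ ^ 2)) : ℝ) : ℂ)) := by
    intro x
    rw [Finset.mul_sum, Finset.sum_mul]
    simp only [mul_assoc]
  simp_rw [h1]
  rw [integral_finsetSum]
  · simp_rw [pairing_one N hN F hF]
  · intro μ _
    refine ((gauss_packet_integrable (n := n) N hN).const_mul (∫ ξ, ‖F ξ‖)).mono' ?_ ?_
    · apply Continuous.aestronglyMeasurable
      have := continuous_ec
      fun_prop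
    · refine Filter.Eventually.of_forall fun x => ?_
      rw [norm_mul, norm_mul, norm_ec, one_mul, Complex.norm_real,
        Real.norm_of_nonneg (by positivity)]
      gcongr
      exact norm_fourierInv_le F x

lemma fourier_avgOp {n : ℕ} (γ : ℝ → Euc n) (hγ : Continuous γ) (χ : ℝ → ℝ) (hχ : Continuous χ)
    (hχc : HasCompactSupport χ) (f : Euc n → ℂ) (hfc : Continuous f) (hf : Integrable f)
    (ξ : Euc n) : 𝓕 (avgOp γ χ f) ξ = mm γ χ ξ * 𝓕 f ξ := by
  rw [fourier_ec]
  have h1 : ∀ x, ec (-⟪x, ξ⟫) * avgOp γ χ f x =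
      ∫ s, ec (-⟪x, ξ⟫) * (f (x - γ s) * (χ s : ℂ)) := by
    intro x; rw [avgOp, integral_const_mul]
  simp_rw [h1]
  have hχi : Integrable χ := hχ.integrable_of_hasCompactSupport hχc
  rw [integral_integral_swap]
  · have h2 : ∀ s, ∫ x, ec (-⟪x, ξ⟫) * (f (x - γ s) * (χ s : ℂ)) =
        (ec (-⟪γ s, ξ⟫) * (χ s : ℂ)) * 𝓕 f ξ := by
      intro s
      rw [← integral_add_right_eq_self _ (γ s), fourier_ec, ← integral_const_mul]
      congr 1; ext x
      simp only [add_sub_cancel_right, inner_add_left, neg_add, ec_add]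
      ring
    simp_rw [h2]
    rw [integral_mul_const, mm]
  · have hcont : Continuous (Function.uncurry fun (x : Euc n) (s : ℝ) =>
        ec (-⟪x, ξ⟫) * (f (x - γ s) * (χ s : ℂ))) := by
      have := continuous_ec
      simp only [Function.uncurry_def]
      fun_prop
    rw [integrable_prod_iff' hcont.aestronglyMeasurable]
    constructor
    · refine Filter.Eventually.of_forall fun s => ?_
      refine (((hf.comp_sub_right (γ s)).norm).mul_const (|χ s|)).mono' ?_ ?_
      · apply Continuous.aestronglyMeasurable
        exact hcont.comp (by fun_prop : Continuous fun x : Euc n => (x, s))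
      · refine Filter.Eventually.of_forall fun x => ?_
        simp [norm_ec]
    · have : (fun s : ℝ => ∫ x : Euc n, ‖Function.uncurry (fun (x : Euc n) (s : ℝ) =>
        ec (-⟪x, ξ⟫) * (f (x - γ s) * (χ s : ℂ))) (x, s)‖) = fun s => (∫ x, ‖f x‖) * ‖χ s‖ := by
        ext s
        simp only [Function.uncurry_apply_pair, norm_mul, norm_ec, one_mul, Complex.norm_real]
        rw [integral_mul_const, integral_sub_right_eq_self (fun x => ‖f x‖)]
      rw [this]
      exact hχi.norm.const_mul _

lemma norm_upper {n : ℕ} (p : ℝ≥0∞) (hp : 1 ≤ p) (f : Euc n → ℂ)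
    (hfi : Integrable f) (A B : ℝ) (hA : 0 < A) (hB : 0 ≤ B) (hfA : ∀ x, ‖f x‖ ≤ A)
    (hfB : ∫ x, ‖f x‖ ≤ B) :
    eLpNorm f p volume ≤ ENNReal.ofReal (A ^ (1 - (1 / p).toReal) * B ^ (1 / p).toReal) := by
  by_cases hpt : p = ⊤
  · subst hpt
    simp only [one_div, ENNReal.inv_top, ENNReal.toReal_zero, sub_zero, Real.rpow_one,
      Real.rpow_zero, mul_one]
    rw [eLpNorm_exponent_top]
    exact eLpNormEssSup_le_of_ae_bound (Filter.Eventually.of_forall hfA)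
  have hp0 : p ≠ 0 := by intro h; simp [h] at hp
  have hpr : 1 ≤ p.toReal := by
    rw [← ENNReal.toReal_one]; exact ENNReal.toReal_mono hpt hp
  rw [eLpNorm_eq_lintegral_rpow_enorm_toReal hp0 hpt]
  set P := p.toReal
  have hq : (1 / p).toReal = 1 / P := by simp [P]
  rw [hq]
  have h1 : ∫⁻ x, ‖f x‖ₑ ^ P ≤ ENNReal.ofReal (A ^ (P - 1) * B) := by
    calc ∫⁻ x, ‖f x‖ₑ ^ P ≤ ∫⁻ x, ENNReal.ofReal (A ^ (P - 1)) * ‖f x‖ₑ := by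
          apply lintegral_mono
          intro x
          have e1 : ‖f x‖ₑ ^ P = ‖f x‖ₑ ^ (P - 1) * ‖f x‖ₑ := by
            conv_rhs => rw [← ENNReal.rpow_one (‖f x‖ₑ)]
            rw [← ENNReal.rpow_mul, ← ENNReal.rpow_add_of_nonneg] <;> first | linarith | skip
            congr 1; ring
          simp only []
          rw [e1]
          gcongr
          rw [← ENNReal.ofReal_rpow_of_pos hA]
          apply ENNReal.rpow_le_rpow _ (by linarith)
          rw [← ofReal_norm]
          exact ENNReal.ofReal_le_ofReal (hfA x)
      _ = ENNReal.ofReal (A ^ (P - 1)) * ENNReal.ofReal (∫ x, ‖f x‖) := by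
          rw [lintegral_const_mul' _ _ ENNReal.ofReal_ne_top, 
            ofReal_integral_norm_eq_lintegral_enorm hfi]
      _ ≤ _ := by
          rw [ENNReal.ofReal_mul (by positivity)]
          gcongr
  calc (∫⁻ x, ‖f x‖ₑ ^ P) ^ (1 / P) ≤ (ENNReal.ofReal (A ^ (P - 1) * B)) ^ (1 / P) := by
        gcongr
    _ = _ := by
        rw [ENNReal.ofReal_rpow_of_nonneg (by positivity) (by positivity),
          Real.mul_rpow (by positivity) hB, ← Real.rpow_mul hA.le]
        congr 3
        field_simp

lemma norm_lower {n : ℕ} (p : ℝ≥0∞) (hp : 2 ≤ p) (N : ℝ) (hN : 0 < N) (H S : Euc n → ℂ)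
    (hH : Continuous H) (hS : Continuous S) (D Q : ℝ) (hD : 0 ≤ D) (hQ : 0 ≤ Q)
    (hHD : eLpNorm H p volume ≤ ENNReal.ofReal D)
    (hSi : Integrable fun x => ‖S x‖ ^ 2 * (N ^ n * Real.exp (-(Real.pi * N ^ 2 * ‖x‖ ^ 2))))
    (hSQ : ∫ x, ‖S x‖ ^ 2 * (N ^ n * Real.exp (-(Real.pi * N ^ 2 * ‖x‖ ^ 2))) ≤ Q ^ 2) :
    ‖∫ x, (H x * S x) * ((N ^ n * Real.exp (-(Real.pi * N ^ 2 * ‖x‖ ^ 2)) : ℝ) : ℂ)‖ ≤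
      (N ^ n) ^ (1 / p).toReal * D * Q := by
  set ρ : Euc n → ℝ := fun x => N ^ n * Real.exp (-(Real.pi * N ^ 2 * ‖x‖ ^ 2)) with hρ
  have hρ0 : ∀ x, 0 ≤ ρ x := fun x => by simp only [hρ]; positivity
  have hρc : Continuous ρ := by simp only [hρ]; fun_prop
  set μ : Measure (Euc n) := volume.withDensity fun x => ENNReal.ofReal (ρ x) with hμ
  have hρm : Measurable fun x => ENNReal.ofReal (ρ x) := hρc.measurable.ennreal_ofReal
  have hprob : IsProbabilityMeasure μ := by
    constructor
    rw [hμ, withDensity_apply _ MeasurableSet.univ, setLIntegral_univ,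
      ← ofReal_integral_eq_lintegral_ofReal (gauss_packet_integrable N hN)
        (Filter.Eventually.of_forall hρ0), gauss_packet_integral N hN, ENNReal.ofReal_one]
  have hle : μ ≤ ENNReal.ofReal (N ^ n) • volume := by
    rw [hμ, ← withDensity_const]
    apply withDensity_mono
    refine Filter.Eventually.of_forall fun x => ENNReal.ofReal_le_ofReal ?_
    simp only [hρ]
    have : Real.exp (-(Real.pi * N ^ 2 * ‖x‖ ^ 2)) ≤ 1 := by
      rw [Real.exp_le_one_iff]; simp; positivity
    have h0 : 0 ≤ N ^ n := by positivity
    nlinarith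
  have hH2 : eLpNorm H 2 μ ≤ ENNReal.ofReal ((N ^ n) ^ (1 / p).toReal * D) := by
    calc eLpNorm H 2 μ ≤ eLpNorm H p μ :=
          eLpNorm_le_eLpNorm_of_exponent_le hp hH.aestronglyMeasurable
      _ ≤ eLpNorm H p (ENNReal.ofReal (N ^ n) • volume) := eLpNorm_mono_measure H hle
      _ = ENNReal.ofReal (N ^ n) ^ (1 / p).toReal • eLpNorm H p volume := by
          apply eLpNorm_smul_measure_of_ne_zero
          simp only [ne_eq, ENNReal.ofReal_eq_zero, not_le]; positivity
      _ ≤ _ := by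
          rw [smul_eq_mul, ENNReal.ofReal_mul (by positivity),
            ENNReal.ofReal_rpow_of_pos (by positivity)]
          gcongr
  have hS2 : eLpNorm S 2 μ ≤ ENNReal.ofReal Q := by
    rw [eLpNorm_eq_lintegral_rpow_enorm_toReal (by norm_num) (by norm_num)]
    have e1 : ∫⁻ x, ‖S x‖ₑ ^ (2 : ℝ≥0∞).toReal ∂μ =
        ENNReal.ofReal (∫ x, ‖S x‖ ^ 2 * ρ x) := by
      rw [ofReal_integral_eq_lintegral_ofReal hSi
        (Filter.Eventually.of_forall fun x => mul_nonneg (by positivity) (hρ0 x)), hμ,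
        lintegral_withDensity_eq_lintegral_mul _ hρm (by
          have := hS.measurable; fun_prop)]
      apply lintegral_congr
      intro x
      simp only [Pi.mul_apply]
      rw [ENNReal.ofReal_mul (p := ‖S x‖ ^ 2) (by positivity), mul_comm,
        ENNReal.ofReal_pow (norm_nonneg _),
        ofReal_norm]
      simp [hρ]
    rw [e1]
    calc _ ≤ (ENNReal.ofReal (Q ^ 2)) ^ (1 / (2 : ℝ≥0∞).toReal) := by gcongr
      _ = _ := by
        rw [ENNReal.ofReal_pow hQ, ← ENNReal.rpow_natCast, ← ENNReal.rpow_mul]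
        simp
  have hprod : ∫⁻ x, ‖H x‖ₑ * ‖S x‖ₑ ∂μ ≤ eLpNorm H 2 μ * eLpNorm S 2 μ := by
    have := ENNReal.lintegral_mul_le_Lp_mul_Lq μ (Real.HolderConjugate.two_two)
      (f := fun x => ‖H x‖ₑ) (g := fun x => ‖S x‖ₑ) (by
        have := hH.measurable; fun_prop) (by have := hS.measurable; fun_prop)
    rw [eLpNorm_eq_lintegral_rpow_enorm_toReal (by norm_num) (by norm_num),
      eLpNorm_eq_lintegral_rpow_enorm_toReal (by norm_num) (by norm_num)]
    simpa using this
  have hfin : ‖∫ x, (H x * S x) * ((ρ x : ℝ) : ℂ)‖ₑ ≤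
      ENNReal.ofReal ((N ^ n) ^ (1 / p).toReal * D * Q) := by
    calc _ ≤ ∫⁻ x, ‖(H x * S x) * ((ρ x : ℝ) : ℂ)‖ₑ := enorm_integral_le_lintegral_enorm _
      _ = ∫⁻ x, ‖H x‖ₑ * ‖S x‖ₑ ∂μ := by
          rw [hμ, lintegral_withDensity_eq_lintegral_mul _ hρm (by
            have := hS.measurable; have := hH.measurable; fun_prop)]
          apply lintegral_congr
          intro x
          simp only [Pi.mul_apply]
          rw [enorm_mul, enorm_mul, mul_comm, ← ofReal_norm ((ρ x : ℝ) : ℂ),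
            Complex.norm_real, Real.norm_of_nonneg (hρ0 x)]
      _ ≤ eLpNorm H 2 μ * eLpNorm S 2 μ := hprod
      _ ≤ ENNReal.ofReal ((N ^ n) ^ (1 / p).toReal * D) * ENNReal.ofReal Q := by gcongr
      _ = _ := by rw [← ENNReal.ofReal_mul (by positivity)]
  rw [← ofReal_norm] at hfin
  exact (ENNReal.ofReal_le_ofReal_iff (by positivity)).1 hfin

lemma bilip {n : ℕ} (a b : ℝ) (γ : ℝ → Euc n) (hγ : ContDiff ℝ (⊤ : ℕ∞) γ)
    (hinj : Set.InjOn γ (Set.Icc a b)) (hreg : ∀ s ∈ Set.Icc a b, deriv γ s ≠ 0) :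
    ∃ c > 0, ∀ s ∈ Set.Icc a b, ∀ t ∈ Set.Icc a b, c * |s - t| ≤ ‖γ s - γ t‖ := by
  have hK : IsCompact (Set.Icc a b ×ˢ Set.Icc a b) := isCompact_Icc.prod isCompact_Icc
  have key : ∃ c > 0, ∀ q ∈ Set.Icc a b ×ˢ Set.Icc a b,
      c * |q.1 - q.2| ≤ ‖γ q.1 - γ q.2‖ := by
    refine hK.induction_on (p := fun U => ∃ c > 0, ∀ q ∈ U, c * |q.1 - q.2| ≤ ‖γ q.1 - γ q.2‖)
      ?_ ?_ ?_ ?_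
    · exact ⟨1, one_pos, by simp⟩
    · rintro U V hUV ⟨c, hc, h⟩
      exact ⟨c, hc, fun q hq => h q (hUV hq)⟩
    · rintro U V ⟨c, hc, h⟩ ⟨d, hd, h'⟩
      refine ⟨min c d, lt_min hc hd, ?_⟩
      rintro q (hq | hq)
      · exact (mul_le_mul_of_nonneg_right (min_le_left _ _) (abs_nonneg _)).trans (h q hq)
      · exact (mul_le_mul_of_nonneg_right (min_le_right _ _) (abs_nonneg _)).trans (h' q hq)
    · rintro ⟨s, t⟩ ⟨hs, ht⟩
      simp only at hs ht
      by_cases hst : s = t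
      · subst hst
        have hd : HasStrictDerivAt γ (deriv γ s) s :=
          (hγ.contDiffAt.hasStrictDerivAt (by simp))
        have hpos : 0 < ‖deriv γ s‖ := norm_pos_iff.2 (hreg s hs)
        have ho := hd.isLittleO.def (c := ‖deriv γ s‖ / 2) (by positivity)
        refine ⟨_, mem_nhdsWithin_of_mem_nhds ho, ‖deriv γ s‖ / 2, by positivity, ?_⟩
        rintro ⟨x, y⟩ hxy
        simp only [mem_setOf_eq] at hxy
        simp only
        have h1 : ‖(x - y) • deriv γ s‖ = |x - y| * ‖deriv γ s‖ := by
          rw [norm_smul, Real.norm_eq_abs]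
        have h2 : ‖(x - y) • deriv γ s‖ ≤ ‖γ x - γ y‖ + ‖γ x - γ y - (x - y) • deriv γ s‖ := by
          have := norm_sub_le (γ x - γ y) (γ x - γ y - (x - y) • deriv γ s)
          simpa using this
        simp only [ContinuousLinearMap.toSpanSingleton_apply, Real.norm_eq_abs] at hxy
        nlinarith
      · have hne : 0 < ‖γ s - γ t‖ := by
          rw [norm_pos_iff, sub_ne_zero]
          exact fun h => hst (hinj hs ht h)
        have hc : Continuous fun q : ℝ × ℝ => ‖γ q.1 - γ q.2‖ - ‖γ s - γ t‖ / (2 * (1 + |s - t|)) * |q.1 - q.2| := by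
          have := hγ.continuous
          fun_prop
        have hp : 0 < ‖γ s - γ t‖ - ‖γ s - γ t‖ / (2 * (1 + |s - t|)) * |s - t| := by
          have : ‖γ s - γ t‖ / (2 * (1 + |s - t|)) * |s - t| < ‖γ s - γ t‖ := by
            rw [div_mul_eq_mul_div, div_lt_iff₀ (by positivity)]
            nlinarith [abs_nonneg (s - t)]
          linarith
        have := (isOpen_lt continuous_const hc).mem_nhds (show (s, t) ∈ {q : ℝ × ℝ | (0 : ℝ) < ‖γ q.1 - γ q.2‖ - ‖γ s - γ t‖ / (2 * (1 + |s - t|)) * |q.1 - q.2|} from hp)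
        refine ⟨_, mem_nhdsWithin_of_mem_nhds this, ‖γ s - γ t‖ / (2 * (1 + |s - t|)),
          by positivity, ?_⟩
        rintro q hq
        simp only [mem_setOf_eq] at hq
        linarith
  obtain ⟨c, hc, h⟩ := key
  exact ⟨c, hc, fun s hs t ht => h (s, t) ⟨hs, ht⟩⟩

lemma sum_gauss_bound (κ : ℝ) (hκ : 0 < κ) :
    ∃ C > 0, ∀ (N ν₀ : ℕ),
      ∑ ν ∈ Finset.range N, Real.exp (-(κ * ((ν : ℝ) - ν₀) ^ 2)) ≤ C := by
  have hs : Summable fun k : ℤ => Real.exp (-(κ * (k : ℝ) ^ 2)) := by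
    have hn : Summable fun k : ℕ => Real.exp (-(κ * (k : ℝ) ^ 2)) := by
      refine Summable.of_nonneg_of_le (fun _ => by positivity) (fun k => ?_)
        (Real.summable_exp_neg_nat.comp_injective Function.injective_id |> fun _ =>
          (summable_geometric_of_lt_one (r := Real.exp (-κ)) (by positivity)
            (by rw [Real.exp_lt_one_iff]; linarith)))
      rw [← Real.exp_nat_mul]
      apply Real.exp_le_exp.2
      have : (k : ℝ) ≤ (k : ℝ) ^ 2 := by
        exact_mod_cast Nat.le_self_pow (by norm_num) k
      nlinarith
    apply Summable.of_nat_of_neg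
    · simpa using hn
    · simpa using hn
  refine ⟨∑' k : ℤ, Real.exp (-(κ * (k : ℝ) ^ 2)) + 1, ?_, fun N ν₀ => ?_⟩
  · have : 0 ≤ ∑' k : ℤ, Real.exp (-(κ * (k : ℝ) ^ 2)) := tsum_nonneg fun _ => by positivity
    linarith
  · have hi : Set.InjOn (fun ν : ℕ => (ν : ℤ) - ν₀) (Finset.range N) := by
      intro x _ y _ h
      simpa using h
    have := hs.sum_le_tsum ((Finset.range N).image fun ν : ℕ => (ν : ℤ) - ν₀)
      (fun _ _ => by positivity)
    rw [Finset.sum_image hi] at this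
    push_cast at this
    linarith

/-- overlap bound -/
lemma overlap {n : ℕ} (a b : ℝ) (γ : ℝ → Euc n) (c : ℝ) (hc : 0 < c)
    (hb : ∀ s ∈ Set.Icc a b, ∀ t ∈ Set.Icc a b, c * |s - t| ≤ ‖γ s - γ t‖)
    (d : ℝ) (hd : 0 < d) :
    ∃ C > 0, ∀ (N : ℕ), 0 < N → ∀ t₀ : ℝ,
      (∀ ν < N, t₀ + ν * (d / N) ∈ Set.Icc a b) → ∀ x : Euc n,
      ∑ ν ∈ Finset.range N, Real.exp (-(Real.pi * (N : ℝ) ^ 2 * ‖x + γ (t₀ + ν * (d / N))‖ ^ 2))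
        ≤ C := by
  obtain ⟨C, hC, h⟩ := sum_gauss_bound (Real.pi * (c * d / 2) ^ 2) (by positivity)
  refine ⟨C, hC, fun N hN t₀ ht x => ?_⟩
  have hNr : (0 : ℝ) < N := by exact_mod_cast hN
  obtain ⟨ν₀, hν₀, hmin⟩ := Finset.exists_min_image (Finset.range N)
    (fun ν => ‖x + γ (t₀ + ν * (d / N))‖) ⟨0, Finset.mem_range.2 hN⟩
  refine le_trans (Finset.sum_le_sum fun ν hν => ?_) (h N ν₀)
  apply Real.exp_le_exp.2
  apply neg_le_neg
  have h1 := hmin ν hν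
  have h2 := hb _ (ht ν (Finset.mem_range.1 hν)) _ (ht ν₀ (Finset.mem_range.1 hν₀))
  have h3 : ‖γ (t₀ + ν * (d / N)) - γ (t₀ + ν₀ * (d / N))‖ ≤
      ‖x + γ (t₀ + ν * (d / N))‖ + ‖x + γ (t₀ + ν₀ * (d / N))‖ := by
    have := norm_sub_le (x + γ (t₀ + ν * (d / N))) (x + γ (t₀ + ν₀ * (d / N)))
    simpa using this
  have h4 : |t₀ + ν * (d / N) - (t₀ + ν₀ * (d / N))| = |(ν : ℝ) - ν₀| * (d / N) := by
    rw [show t₀ + ν * (d / N) - (t₀ + ν₀ * (d / N)) = ((ν : ℝ) - ν₀) * (d / N) by ring, abs_mul,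
      abs_of_pos (by positivity : 0 < d / N)]
  rw [h4] at h2
  have h5 : c * d / 2 * |(ν : ℝ) - ν₀| ≤ N * ‖x + γ (t₀ + ν * (d / N))‖ := by
    have h6 : c * (|(ν : ℝ) - ν₀| * (d / N)) ≤ 2 * ‖x + γ (t₀ + ν * (d / N))‖ := by linarith
    have h7 : c * (|(ν : ℝ) - ν₀| * (d / N)) * N = c * d * |(ν : ℝ) - ν₀| := by
      field_simp
    nlinarith
  have h8 := pow_le_pow_left₀ (by positivity) h5 2
  rw [mul_pow, mul_pow, sq_abs] at h8
  nlinarith [Real.pi_pos]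

lemma ww_pos {n : ℕ} (α : ℝ) (ξ : Euc n) : 0 < ww α ξ := by
  unfold ww; positivity

lemma ww_continuous {n : ℕ} (α : ℝ) : Continuous (ww α : Euc n → ℝ) := by
  unfold ww
  apply Continuous.rpow_const (by fun_prop)
  intro x; left; positivity

lemma Gw_continuous {n : ℕ} (N : ℝ) (η : Euc n) : Continuous (Gw N η) := by
  unfold Gw; fun_prop

lemma Gw_pos {n : ℕ} (N : ℝ) (η ξ : Euc n) : 0 < Gw N η ξ := Real.exp_pos _

lemma Gw_le_one {n : ℕ} (N : ℝ) (η ξ : Euc n) : Gw N η ξ ≤ 1 := by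
  unfold Gw
  rw [Real.exp_le_one_iff]
  have := Real.pi_pos
  have : 0 ≤ Real.pi / N ^ 2 * ‖ξ - η‖ ^ 2 := by positivity
  linarith

lemma ww_le {n : ℕ} (α : ℝ) (hα : 0 ≤ α) (j : ℕ) (hj : α ≤ j) (ξ : Euc n) :
    ww α ξ ≤ (1 + ‖ξ‖) ^ j := by
  unfold ww
  calc (1 + ‖ξ‖ ^ 2) ^ (α / 2) ≤ ((1 + ‖ξ‖) ^ (2 : ℕ)) ^ (α / 2) := by
        apply Real.rpow_le_rpow (by positivity) _ (by positivity)
        nlinarith [norm_nonneg ξ]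
    _ = (1 + ‖ξ‖) ^ α := by
        rw [← Real.rpow_natCast, ← Real.rpow_mul (by positivity)]
        congr 1; push_cast; ring
    _ ≤ (1 + ‖ξ‖) ^ (j : ℝ) := Real.rpow_le_rpow_of_exponent_le (by linarith [norm_nonneg ξ]) hj
    _ = _ := Real.rpow_natCast _ _

lemma ww_Gw_integrable {n : ℕ} (α : ℝ) (hα : 0 ≤ α) (N : ℝ) (hN : 0 < N) (η : Euc n) :
    Integrable fun ξ => ww α ξ * Gw N η ξ := by
  obtain ⟨j, hj⟩ := exists_nat_ge α
  have hp := Real.pi_pos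
  refine ((gauss_integrable (n := n) (Real.pi / N ^ 2) (by positivity) j η).const_mul
    ((1 + ‖η‖) ^ j)).mono' ((ww_continuous α).mul (Gw_continuous N η)).aestronglyMeasurable
    (Filter.Eventually.of_forall fun ξ => ?_)
  rw [Real.norm_of_nonneg (mul_nonneg (ww_pos _ _).le (Gw_pos _ _ _).le), ← mul_assoc, ← mul_pow]
  apply mul_le_mul_of_nonneg_right _ (Gw_pos _ _ _).le
  refine (ww_le α hα j hj ξ).trans ?_
  apply pow_le_pow_left₀ (by positivity)
  have : ‖ξ‖ ≤ ‖η‖ + ‖ξ - η‖ := by simpa using norm_add_le η (ξ - η)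
  nlinarith [mul_nonneg (norm_nonneg η) (norm_nonneg (ξ - η))]

lemma mm_continuous {n : ℕ} (γ : ℝ → Euc n) (hγ : Continuous γ) (χ : ℝ → ℝ) (hχ : Continuous χ)
    (hχc : HasCompactSupport χ) : Continuous (mm γ χ) := by
  unfold mm
  have hχi : Integrable χ := hχ.integrable_of_hasCompactSupport hχc
  have := continuous_ec
  refine continuous_of_dominated (bound := fun s => ‖χ s‖) ?_ ?_ hχi.norm ?_
  · intro ξ; apply Continuous.aestronglyMeasurable; fun_prop
  · intro ξ; refine Filter.Eventually.of_forall fun s => ?_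
    rw [norm_mul, norm_ec, one_mul, Complex.norm_real]
  · refine Filter.Eventually.of_forall fun s => ?_
    fun_prop

lemma norm_mm_le {n : ℕ} (γ : ℝ → Euc n) (χ : ℝ → ℝ) (ξ : Euc n) : ‖mm γ χ ξ‖ ≤ ∫ s, |χ s| := by
  unfold mm
  refine (norm_integral_le_integral_norm _).trans (le_of_eq ?_)
  congr 1; ext s
  rw [norm_mul, norm_ec, one_mul, Complex.norm_real, Real.norm_eq_abs]

/-- one coefficient of the bilinear form -/
def FF {n : ℕ} (N α : ℝ) (γ : ℝ → Euc n) (χ : ℝ → ℝ) (t : ℝ) (ξ₀ ξ : Euc n) : ℂ :=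
  ((ww α ξ : ℝ) : ℂ) * (mm γ χ ξ * (ec ⟪γ t, ξ⟫ * (Gw N ξ₀ ξ : ℂ)))

lemma FF_continuous {n : ℕ} (N α : ℝ) (γ : ℝ → Euc n) (hγ : Continuous γ)
    (χ : ℝ → ℝ) (hχ : Continuous χ) (hχc : HasCompactSupport χ) (t : ℝ) (ξ₀ : Euc n) :
    Continuous (FF N α γ χ t ξ₀) := by
  unfold FF
  have h1 := mm_continuous γ hγ χ hχ hχc
  have h2 := ww_continuous (n := n) α
  have h3 := Gw_continuous N ξ₀
  have h4 := continuous_ec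
  fun_prop

lemma FF_norm_le {n : ℕ} (N α : ℝ) (γ : ℝ → Euc n) (χ : ℝ → ℝ) (t : ℝ) (ξ₀ ξ : Euc n) :
    ‖FF N α γ χ t ξ₀ ξ‖ ≤ (∫ s, |χ s|) * (ww α ξ * Gw N ξ₀ ξ) := by
  unfold FF
  rw [norm_mul, norm_mul, norm_mul, norm_ec, Complex.norm_real, Complex.norm_real,
    Real.norm_of_nonneg (ww_pos _ _).le, Real.norm_of_nonneg (Gw_pos _ _ _).le, one_mul]
  have := mul_le_mul_of_nonneg_right (norm_mm_le γ χ ξ)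
    (mul_nonneg (ww_pos α ξ).le (Gw_pos N ξ₀ ξ).le)
  linarith

lemma FF_integrable {n : ℕ} (N : ℝ) (hN : 0 < N) (α : ℝ) (hα : 0 ≤ α) (γ : ℝ → Euc n)
    (hγ : Continuous γ)
    (χ : ℝ → ℝ) (hχ : Continuous χ) (hχc : HasCompactSupport χ) (t : ℝ) (ξ₀ : Euc n) :
    Integrable (FF N α γ χ t ξ₀) :=
  ((ww_Gw_integrable α hα N hN ξ₀).const_mul (∫ s, |χ s|)).mono'
    (FF_continuous N α γ hγ χ hχ hχc t ξ₀).aestronglyMeasurable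
    (Filter.Eventually.of_forall fun ξ => FF_norm_le N α γ χ t ξ₀ ξ)

/-- the bilinear form -/
def PP {n : ℕ} (N α : ℝ) (γ : ℝ → Euc n) (χ : ℝ → ℝ) (t : ℝ) (ξ₀ η : Euc n) : ℂ :=
  ∫ ξ, FF N α γ χ t ξ₀ ξ * (Gw N η ξ : ℂ)

lemma wp_norm {n : ℕ} (N : ℝ) (hN : 0 < N) (ξ y x : Euc n) :
    ‖wp N ξ y x‖ = N ^ n * Real.exp (-(Real.pi * N ^ 2 * ‖x + y‖ ^ 2)) := by
  unfold wp
  rw [norm_mul, norm_ec, one_mul, Complex.norm_real, Real.norm_of_nonneg (by positivity)]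

lemma wp_integral_norm {n : ℕ} (N : ℝ) (hN : 0 < N) (ξ y : Euc n) :
    ∫ x, ‖wp N ξ y x‖ = 1 := by
  simp_rw [wp_norm N hN]
  rw [integral_add_right_eq_self (fun x : Euc n => N ^ n * Real.exp (-(Real.pi * N ^ 2 * ‖x‖ ^ 2)))]
  exact gauss_packet_integral N hN

lemma expsum_sq {n : ℕ} (N : ℝ) (hN : 0 < N) (M : ℕ) (η : ℕ → Euc n) :
    (Integrable fun x => ‖∑ μ ∈ Finset.range M, ec (-⟪η μ, x⟫)‖ ^ 2 *
      (N ^ n * Real.exp (-(Real.pi * N ^ 2 * ‖x‖ ^ 2)))) ∧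
    ∫ x, ‖∑ μ ∈ Finset.range M, ec (-⟪η μ, x⟫)‖ ^ 2 *
      (N ^ n * Real.exp (-(Real.pi * N ^ 2 * ‖x‖ ^ 2))) =
      ∑ μ ∈ Finset.range M, ∑ μ' ∈ Finset.range M, Gw N (η μ) (η μ') := by
  have hec := continuous_ec
  have hintg : ∀ v : Euc n, Integrable fun x : Euc n => ec (-⟪v, x⟫) *
      ((N ^ n * Real.exp (-(Real.pi * N ^ 2 * ‖x‖ ^ 2)) : ℝ) : ℂ) := by
    intro v
    refine (gauss_packet_integrable (n := n) N hN).mono' ?_ (Filter.Eventually.of_forall fun x => ?_)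
    · apply Continuous.aestronglyMeasurable; fun_prop
    · rw [norm_mul, norm_ec, one_mul, Complex.norm_real, Real.norm_of_nonneg (by positivity)]
  have hpt : ∀ x : Euc n, (((‖∑ μ ∈ Finset.range M, ec (-⟪η μ, x⟫)‖ ^ 2 *
      (N ^ n * Real.exp (-(Real.pi * N ^ 2 * ‖x‖ ^ 2))) : ℝ)) : ℂ) =
      ∑ μ ∈ Finset.range M, ∑ μ' ∈ Finset.range M, ec (-⟪η μ' - η μ, x⟫) *
      ((N ^ n * Real.exp (-(Real.pi * N ^ 2 * ‖x‖ ^ 2)) : ℝ) : ℂ) := by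
    intro x
    rw [Complex.ofReal_mul, Complex.ofReal_pow, ← Complex.mul_conj', map_sum,
      Finset.sum_mul_sum, Finset.sum_mul, Finset.sum_comm]
    refine Finset.sum_congr rfl fun μ _ => ?_
    rw [Finset.sum_mul]
    refine Finset.sum_congr rfl fun μ' _ => ?_
    rw [conj_ec, ← ec_add]
    congr 2
    rw [inner_sub_left]; ring
  have hI : Integrable fun x : Euc n => ∑ μ ∈ Finset.range M, ∑ μ' ∈ Finset.range M,
      ec (-⟪η μ' - η μ, x⟫) * ((N ^ n * Real.exp (-(Real.pi * N ^ 2 * ‖x‖ ^ 2)) : ℝ) : ℂ) :=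
    integrable_finsetSum _ fun μ _ => integrable_finsetSum _ fun μ' _ => hintg _
  constructor
  · refine hI.norm.mono' ?_ (Filter.Eventually.of_forall fun x => ?_)
    · apply Continuous.aestronglyMeasurable; fun_prop
    · rw [← hpt, Complex.norm_real]
  · apply Complex.ofReal_injective
    rw [← integral_complex_ofReal]
    simp_rw [hpt]
    rw [integral_finsetSum _ fun μ _ => integrable_finsetSum _ fun μ' _ => hintg _]
    rw [Complex.ofReal_sum]
    refine Finset.sum_congr rfl fun μ _ => ?_
    rw [integral_finsetSum _ fun μ' _ => hintg _, Complex.ofReal_sum]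
    exact Finset.sum_congr rfl fun μ' _ => gauss_packet N hN (η μ) (η μ')

lemma keyK {n : ℕ} (p : ℝ≥0∞) (hp : 2 ≤ p) (α : ℝ) (hα : 0 ≤ α)
    (a b : ℝ) (γ : ℝ → Euc n) (hγ : Continuous γ)
    (c₁ : ℝ) (hc₁ : 0 < c₁)
    (hbl : ∀ s ∈ Set.Icc a b, ∀ t ∈ Set.Icc a b, c₁ * |s - t| ≤ ‖γ s - γ t‖)
    (χ : ℝ → ℝ) (hχ : Continuous χ) (hχc : HasCompactSupport χ)
    (hbdd : ∃ C : ℝ, ∀ f : SchwartzMap (Euc n) ℂ,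
      sobolevNorm p α (avgOp γ χ ⇑f) ≤ ENNReal.ofReal C * eLpNorm (⇑f) p volume)
    (d : ℝ) (hd : 0 < d) (K : ℝ) (hK : 0 < K) :
    ∃ C > 0, ∀ N : ℕ, 0 < N → ∀ t₀ : ℝ, (∀ ν < N, t₀ + ν * (d / N) ∈ Set.Icc a b) →
      ∀ c : ℕ → ℝ, (∀ ν, |c ν| ≤ K) → ∀ (ξ η : ℕ → Euc n) (M : ℕ) (Q : ℝ), 0 ≤ Q →
      ∑ μ ∈ Finset.range M, ∑ μ' ∈ Finset.range M, Gw N (η μ) (η μ') ≤ Q ^ 2 →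
      ‖∑ μ ∈ Finset.range M, ∑ ν ∈ Finset.range N,
        (c ν : ℂ) * PP N α γ χ (t₀ + ν * (d / N)) (ξ ν) (η μ)‖ ≤
        C * (N : ℝ) ^ ((n : ℝ) + (1 / p).toReal) * Q := by
  obtain ⟨Cb, hCb⟩ := hbdd
  obtain ⟨Co, hCo, hov⟩ := overlap a b γ c₁ hc₁ hbl d hd
  set q := (1 / p).toReal with hq
  refine ⟨(max Cb 0 + 1) * (K * Co) ^ (1 - q) * K ^ q, by positivity, ?_⟩
  intro N hN t₀ ht c hc ξ η M Q hQ hQs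
  have hNr : (0 : ℝ) < N := by exact_mod_cast hN
  choose g hg using fun ν : ℕ => wp_schwartz (n := n) N hNr (ξ ν) (γ (t₀ + ν * (d / N)))
  set f : SchwartzMap (Euc n) ℂ := ∑ ν ∈ Finset.range N, (c ν : ℂ) • g ν with hf
  have hfx : ∀ x, f x = ∑ ν ∈ Finset.range N, (c ν : ℂ) * wp N (ξ ν) (γ (t₀ + ν * (d / N))) x := by
    intro x
    simp [hf, hg]
  have hwi : ∀ ν : ℕ, Integrable (wp (n := n) N (ξ ν) (γ (t₀ + ν * (d / N)))) := by
    intro ν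
    have := (g ν).integrable (μ := volume)
    rwa [show ⇑(g ν) = wp (n := n) N (ξ ν) (γ (t₀ + ν * (d / N))) from funext (hg ν)] at this
  have hnle : ∀ x, ‖f x‖ ≤ ∑ ν ∈ Finset.range N, K * ‖wp (n := n) N (ξ ν) (γ (t₀ + ν * (d / N))) x‖ := by
    intro x
    rw [hfx]
    refine (norm_sum_le _ _).trans (Finset.sum_le_sum fun ν _ => ?_)
    rw [norm_mul, Complex.norm_real]
    exact mul_le_mul_of_nonneg_right (hc ν) (norm_nonneg _)
  have hA : ∀ x, ‖f x‖ ≤ K * Co * (N : ℝ) ^ n := by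
    intro x
    refine (hnle x).trans ?_
    simp_rw [wp_norm (n := n) N hNr]
    rw [← Finset.mul_sum, ← Finset.mul_sum]
    have := hov N hN t₀ ht x
    have h2 := mul_le_mul_of_nonneg_left this (by positivity : 0 ≤ K * (N : ℝ) ^ n)
    linarith
  have hB : ∫ x, ‖f x‖ ≤ K * N := by
    calc ∫ x, ‖f x‖ ≤ ∫ x, ∑ ν ∈ Finset.range N, K * ‖wp (n := n) N (ξ ν) (γ (t₀ + ν * (d / N))) x‖ :=
          integral_mono f.integrable.norm
            (integrable_finsetSum _ fun ν _ => (hwi ν).norm.const_mul K) hnle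
      _ = K * N := by
          rw [integral_finsetSum _ fun ν _ => (hwi ν).norm.const_mul K]
          simp_rw [integral_const_mul, wp_integral_norm (n := n) N hNr]
          simp [mul_comm]
  have hp1 : 1 ≤ p := le_trans (by norm_num) hp
  have hup := norm_upper p hp1 f f.integrable _ _ (by positivity) (by positivity) hA hB
  set D := (max Cb 0 + 1) * ((K * Co * (N : ℝ) ^ n) ^ (1 - q) * (K * N) ^ q) with hD
  set F : Euc n → ℂ := fun ξ' => ∑ ν ∈ Finset.range N,
    (c ν : ℂ) * FF N α γ χ (t₀ + ν * (d / N)) (ξ ν) ξ' with hF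
  have hFeq : (fun ξ' : Euc n => (((1 + ‖ξ'‖ ^ 2) ^ (α / 2) : ℝ) : ℂ) * 𝓕 (avgOp γ χ ⇑f) ξ') = F := by
    ext ξ'
    rw [fourier_avgOp γ hγ χ hχ hχc f f.continuous f.integrable, hF]
    have : 𝓕 ⇑f ξ' = ∑ ν ∈ Finset.range N, (c ν : ℂ) *
        (ec ⟪γ (t₀ + ν * (d / N)), ξ'⟫ * (Gw N (ξ ν) ξ' : ℂ)) := by
      rw [fourier_ec]
      simp_rw [hfx, Finset.mul_sum]
      rw [integral_finsetSum]
      · refine Finset.sum_congr rfl fun ν _ => ?_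
        rw [← wp_fourier (n := n) N hNr, fourier_ec, ← integral_const_mul]
        congr 1; ext x; ring
      · intro ν _
        have hcont : Continuous fun x : Euc n => ec (-⟪x, ξ'⟫) := by
          have := continuous_ec; fun_prop
        refine ((hwi ν).const_mul (c ν : ℂ)).bdd_mul (c := 1) hcont.aestronglyMeasurable
          (Filter.Eventually.of_forall fun x => (norm_ec _).le)
    rw [this, Finset.mul_sum, Finset.mul_sum]
    refine Finset.sum_congr rfl fun ν _ => ?_
    unfold FF ww
    ring
  have hFint : ∀ ν : ℕ, Integrable (fun ξ' => FF N α γ χ (t₀ + ν * (d / N)) (ξ ν) ξ') := fun ν =>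
    FF_integrable (n := n) N hNr α hα γ hγ χ hχ hχc _ _
  have hFi : Integrable F := integrable_finsetSum _ fun ν _ => (hFint ν).const_mul _
  have hHD : eLpNorm (𝓕⁻ F) p volume ≤ ENNReal.ofReal D := by
    have h1 := hCb f
    unfold sobolevNorm at h1
    rw [hFeq] at h1
    refine h1.trans ?_
    rw [hD, ENNReal.ofReal_mul (by positivity)]
    gcongr
    exact (le_max_left _ _).trans (by linarith)
  have hec := continuous_ec
  obtain ⟨hSi, hSe⟩ := expsum_sq (n := n) N hNr M η
  have hlow := norm_lower p hp N hNr (𝓕⁻ F) (fun x => ∑ μ ∈ Finset.range M, ec (-⟪η μ, x⟫))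
    (continuous_fourierInv_of_integrable F hFi) (by fun_prop) D Q (by positivity) hQ hHD hSi
    (hSe.trans_le hQs)
  rw [pairing_sum (n := n) N hNr F hFi M η] at hlow
  have hsum : ∀ μ : ℕ, ∫ ξ', F ξ' * (Gw N (η μ) ξ' : ℂ) = ∑ ν ∈ Finset.range N,
        (c ν : ℂ) * PP N α γ χ (t₀ + ν * (d / N)) (ξ ν) (η μ) := by
    intro μ
    simp_rw [hF, Finset.sum_mul]
    rw [integral_finsetSum]
    · refine Finset.sum_congr rfl fun ν _ => ?_
      rw [PP, ← integral_const_mul]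
      congr 1; ext x; ring
    · intro ν _
      refine ((hFint ν).const_mul (c ν : ℂ)).mul_bdd (c := 1)
        (Complex.continuous_ofReal.comp (Gw_continuous (N:ℝ) (η μ))).aestronglyMeasurable
        (Filter.Eventually.of_forall fun x => ?_)
      rw [Complex.norm_real, Real.norm_of_nonneg (Gw_pos _ _ _).le]
      exact Gw_le_one _ _ _
  simp_rw [hsum] at hlow
  refine hlow.trans (le_of_eq ?_)
  congr 1
  rw [hD, Real.mul_rpow (by positivity : 0 ≤ K * Co) (by positivity : 0 ≤ (N : ℝ) ^ n),
    Real.mul_rpow hK.le hNr.le, ← hq]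
  have e1 : ((N : ℝ) ^ n) ^ q * ((N : ℝ) ^ n) ^ (1 - q) * (N : ℝ) ^ q =
      (N : ℝ) ^ ((n : ℝ) + q) := by
    rw [← Real.rpow_natCast, ← Real.rpow_mul hNr.le, ← Real.rpow_mul hNr.le, ← Real.rpow_add hNr,
      ← Real.rpow_add hNr]
    congr 1; ring
  rw [← e1]; ring

lemma exponent_le (x y c C : ℝ) (hc : 0 < c) (N₀ : ℕ)
    (h : ∀ N : ℕ, N₀ ≤ N → 0 < N → c * (N : ℝ) ^ x ≤ C * (N : ℝ) ^ y) : x ≤ y := by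
  by_contra! hxy
  have ht : Filter.Tendsto (fun N : ℕ => (N : ℝ) ^ (x - y)) Filter.atTop Filter.atTop :=
    (tendsto_rpow_atTop (by linarith)).comp tendsto_natCast_atTop_atTop
  obtain ⟨N, hN1, hN2, hN3⟩ := ((ht.eventually_gt_atTop (C / c)).and
    ((Filter.eventually_ge_atTop N₀).and (Filter.eventually_gt_atTop 0))).exists
  have hNr : (0 : ℝ) < N := by exact_mod_cast hN3
  have := h N hN2 hN3
  rw [div_lt_iff₀ hc] at hN1
  have e : (N : ℝ) ^ x = (N : ℝ) ^ (x - y) * (N : ℝ) ^ y := by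
    rw [← Real.rpow_add hNr]; congr 1; ring
  rw [e] at this
  have hp : 0 < (N : ℝ) ^ y := by positivity
  nlinarith

lemma Gw_sq {n : ℕ} (N : ℝ) (η ξ : Euc n) :
    Gw N η ξ * Gw N η ξ = Real.exp (-(2 * Real.pi / N ^ 2 * ‖ξ - η‖ ^ 2)) := by
  unfold Gw
  rw [← Real.exp_add]; congr 1; ring

lemma ww_zero {n : ℕ} (ξ : Euc n) : ww 0 ξ = 1 := by simp [ww]

/-- Fubini for the unweighted form -/
lemma PP_zero {n : ℕ} (N : ℝ) (hN : 0 < N) (γ : ℝ → Euc n) (hγ : Continuous γ) (χ : ℝ → ℝ)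
    (hχ : Continuous χ) (hχc : HasCompactSupport χ) (t : ℝ) (ξ₀ : Euc n) :
    PP N 0 γ χ t ξ₀ ξ₀ = ∫ s, (χ s : ℂ) * (ec (-⟪γ s - γ t, ξ₀⟫) *
      (((N ^ 2 / 2) ^ ((n : ℝ) / 2) * Real.exp (-(Real.pi * N ^ 2 / 2 * ‖γ s - γ t‖ ^ 2)) : ℝ) : ℂ)) := by
  have hχi : Integrable χ := hχ.integrable_of_hasCompactSupport hχc
  have hpi := Real.pi_pos
  have hg : Integrable fun ξ : Euc n => Real.exp (-(2 * Real.pi / N ^ 2 * ‖ξ - ξ₀‖ ^ 2)) := by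
    have := gauss_integrable (n := n) (2 * Real.pi / N ^ 2) (by positivity) 0 ξ₀
    simpa using this
  have h1 : ∀ ξ, FF N 0 γ χ t ξ₀ ξ * (Gw N ξ₀ ξ : ℂ) = ∫ s, (χ s : ℂ) * (ec (-⟪γ s - γ t, ξ⟫) *
      ((Real.exp (-(2 * Real.pi / N ^ 2 * ‖ξ - ξ₀‖ ^ 2)) : ℝ) : ℂ)) := by
    intro ξ
    rw [FF, ww_zero, mm, ← Gw_sq]
    rw [show ((1 : ℝ) : ℂ) * ((∫ s : ℝ, ec (-⟪γ s, ξ⟫) * (χ s : ℂ)) * (ec ⟪γ t, ξ⟫ * (Gw N ξ₀ ξ : ℂ)))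
      * (Gw N ξ₀ ξ : ℂ) = (∫ s : ℝ, ec (-⟪γ s, ξ⟫) * (χ s : ℂ)) *
        (ec ⟪γ t, ξ⟫ * ((Gw N ξ₀ ξ : ℂ) * (Gw N ξ₀ ξ : ℂ))) by push_cast; ring,
      ← integral_mul_const]
    congr 1; ext s
    rw [inner_sub_left, neg_sub, sub_eq_add_neg, ec_add]
    push_cast; ring
  rw [PP]
  simp_rw [h1]
  rw [integral_integral_swap]
  · congr 1; ext s
    rw [integral_const_mul]
    congr 1
    rw [gauss_fourier _ (by positivity)]
    have e1 : Real.pi / (2 * Real.pi / N ^ 2) = N ^ 2 / 2 := by field_simp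
    have e2 : Real.pi ^ 2 * ‖γ s - γ t‖ ^ 2 / (2 * Real.pi / N ^ 2) =
        Real.pi * N ^ 2 / 2 * ‖γ s - γ t‖ ^ 2 := by field_simp
    rw [e1, e2]
  · have hec := continuous_ec
    refine (hg.mul_prod hχi.norm).mono' ?_ (Filter.Eventually.of_forall fun z => ?_)
    · apply Continuous.aestronglyMeasurable
      unfold Function.uncurry
      fun_prop
    · simp only [Function.uncurry]
      rw [norm_mul, norm_mul, norm_ec, Complex.norm_real, Complex.norm_real,
        Real.norm_of_nonneg (Real.exp_pos _).le, one_mul, mul_comm]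

/-- the Gaussian-weighted energy -/
def Phi {n : ℕ} (α N : ℝ) (γ : ℝ → Euc n) (χ : ℝ → ℝ) : ℝ :=
  ∫ ξ, ww α ξ * ‖mm γ χ ξ‖ ^ 2 * (Gw N (0 : Euc n) ξ * Gw N 0 ξ)

lemma Phi_integrable {n : ℕ} (α : ℝ) (hα : 0 ≤ α) (N : ℝ) (hN : 0 < N) (γ : ℝ → Euc n)
    (hγ : Continuous γ) (χ : ℝ → ℝ)
    (hχ : Continuous χ) (hχc : HasCompactSupport χ) :
    Integrable fun ξ => ww α ξ * ‖mm γ χ ξ‖ ^ 2 * (Gw N (0 : Euc n) ξ * Gw N 0 ξ) := by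
  have h1 := mm_continuous γ hγ χ hχ hχc
  have h2 := ww_continuous (n := n) α
  have h3 := Gw_continuous (n := n) N 0
  refine ((ww_Gw_integrable α hα N hN (0 : Euc n)).const_mul ((∫ s, |χ s|) ^ 2)).mono' ?_
    (Filter.Eventually.of_forall fun ξ => ?_)
  · apply Continuous.aestronglyMeasurable; fun_prop
  · have e1 := (ww_pos α ξ).le
    have e2 := (Gw_pos N 0 ξ).le
    rw [Real.norm_of_nonneg (by positivity)]
    have e3 := pow_le_pow_left₀ (norm_nonneg _) (norm_mm_le γ χ ξ) 2
    have e4 := Gw_le_one N 0 ξ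
    calc ww α ξ * ‖mm γ χ ξ‖ ^ 2 * (Gw N (0 : Euc n) ξ * Gw N 0 ξ)
        ≤ ww α ξ * (∫ s, |χ s|) ^ 2 * (1 * Gw N 0 ξ) := by gcongr
      _ = _ := by ring

lemma Phi_eq {n : ℕ} (α : ℝ) (hα : 0 ≤ α) (N : ℝ) (hN : 0 < N) (γ : ℝ → Euc n)
    (hγ : Continuous γ) (χ : ℝ → ℝ)
    (hχ : Continuous χ) (hχc : HasCompactSupport χ) :
    ((Phi α N γ χ : ℝ) : ℂ) = ∫ t, (χ t : ℂ) * PP N α γ χ t 0 0 := by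
  have hχi : Integrable χ := hχ.integrable_of_hasCompactSupport hχc
  have h1 := mm_continuous γ hγ χ hχ hχc
  have h2 := ww_continuous (n := n) α
  have h3 := Gw_continuous (n := n) N 0
  have hec := continuous_ec
  simp_rw [PP, ← integral_const_mul]
  rw [integral_integral_swap, Phi, ← integral_complex_ofReal]
  · congr 1; ext ξ
    have : ∀ t, (χ t : ℂ) * (FF N α γ χ t 0 ξ * (Gw N 0 ξ : ℂ)) =
        (starRingEnd ℂ) (ec (-⟪γ t, ξ⟫) * (χ t : ℂ)) *
          ((ww α ξ : ℂ) * mm γ χ ξ * (Gw N 0 ξ * Gw N 0 ξ)) := by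
      intro t
      rw [map_mul, conj_ec, neg_neg, Complex.conj_ofReal, FF]; ring
    simp_rw [this]
    rw [integral_mul_const, integral_conj]
    change _ = (starRingEnd ℂ) (mm γ χ ξ) * _
    push_cast
    rw [← Complex.mul_conj']
    ring
  · have hg := ww_Gw_integrable α hα N hN (0 : Euc n)
    refine (hχi.norm.mul_prod (hg.const_mul (∫ s, |χ s|))).mono' ?_
      (Filter.Eventually.of_forall fun z => ?_)
    · apply Continuous.aestronglyMeasurable
      unfold FF Function.uncurry
      fun_prop
    · simp only [Function.uncurry]
      rw [norm_mul, norm_mul, Complex.norm_real, Complex.norm_real]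
      refine mul_le_mul_of_nonneg_left ?_ (norm_nonneg _)
      have e1 := FF_norm_le N α γ χ z.1 0 z.2
      have e2 := Gw_le_one N 0 z.2
      rw [Real.norm_of_nonneg (Gw_pos _ _ _).le]
      have := mul_le_mul e1 e2 (Gw_pos _ _ _).le ((norm_nonneg _).trans e1)
      simpa using this

lemma gauss_upper {n : ℕ} (a b : ℝ) (γ : ℝ → Euc n) (hγ : Continuous γ)
    (c₁ : ℝ) (hc₁ : 0 < c₁)
    (hbl : ∀ s ∈ Set.Icc a b, ∀ t ∈ Set.Icc a b, c₁ * |s - t| ≤ ‖γ s - γ t‖)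
    (χ : ℝ → ℝ) (hχ : Continuous χ) (hχc : HasCompactSupport χ)
    (hχs : tsupport χ ⊆ Set.Ioo a b) (hχpos : ∀ s, 0 ≤ χ s) :
    ∃ C > 0, ∀ N : ℝ, 0 < N → ∀ t ∈ Set.Icc a b,
      ∫ s, χ s * Real.exp (-(Real.pi * N ^ 2 / 2 * ‖γ s - γ t‖ ^ 2)) ≤ C / N := by
  obtain ⟨K, hK⟩ := hχ.bounded_above_of_compact_support hχc
  have hK0 : 0 ≤ K := (norm_nonneg _).trans (hK 0)
  have hpi := Real.pi_pos
  refine ⟨(K + 1) * √2 / c₁, by positivity, fun N hN t ht => ?_⟩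
  have hG : Integrable fun s : ℝ => Real.exp (-(Real.pi * N ^ 2 / 2 * c₁ ^ 2) * (s - t) ^ 2) :=
    (integrable_exp_neg_mul_sq (b := Real.pi * N ^ 2 / 2 * c₁ ^ 2) (by positivity)).comp_sub_right t
  calc ∫ s, χ s * Real.exp (-(Real.pi * N ^ 2 / 2 * ‖γ s - γ t‖ ^ 2))
      ≤ ∫ s : ℝ, (K + 1) * Real.exp (-(Real.pi * N ^ 2 / 2 * c₁ ^ 2) * (s - t) ^ 2) := by
        refine integral_mono_of_nonneg (Filter.Eventually.of_forall fun s => ?_)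
          (hG.const_mul _) (Filter.Eventually.of_forall fun s => ?_)
        · exact mul_nonneg (hχpos s) (Real.exp_pos _).le
        · simp only
          by_cases hs : s ∈ Set.Icc a b
          · have h1 := hbl s hs t ht
            have h2 := pow_le_pow_left₀ (by positivity) h1 2
            rw [mul_pow, sq_abs] at h2
            have h3 : χ s ≤ K + 1 := by
              have := (le_abs_self _).trans (hK s); linarith
            apply mul_le_mul h3 _ (Real.exp_pos _).le (by linarith)
            apply Real.exp_le_exp.2
            have h4 := mul_le_mul_of_nonneg_left h2 (by positivity : 0 ≤ Real.pi * N ^ 2 / 2)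
            linarith
          · have : χ s = 0 := by
              by_contra h
              exact hs (Ioo_subset_Icc_self (hχs (subset_tsupport _ h)))
            rw [this, zero_mul]; positivity
    _ = (K + 1) * √(Real.pi / (Real.pi * N ^ 2 / 2 * c₁ ^ 2)) := by
        rw [integral_const_mul, integral_sub_right_eq_self
          (fun s : ℝ => Real.exp (-(Real.pi * N ^ 2 / 2 * c₁ ^ 2) * s ^ 2)), integral_gaussian]
    _ = (K + 1) * √2 / c₁ / N := by
        have : Real.pi / (Real.pi * N ^ 2 / 2 * c₁ ^ 2) = 2 / (c₁ * N) ^ 2 := by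
          field_simp
        rw [this, Real.sqrt_div (by norm_num), Real.sqrt_sq (by positivity)]
        field_simp

lemma chi_pos_interval (a b : ℝ) (χ : ℝ → ℝ) (hχ : Continuous χ) 
    (hχs : tsupport χ ⊆ Set.Ioo a b) (hχpos : ∀ s, 0 ≤ χ s) (hχne : χ ≠ 0) :
    ∃ s₀ δ₀ κ : ℝ, 0 < δ₀ ∧ 0 < κ ∧ ∀ s ∈ Set.Icc s₀ (s₀ + 2 * δ₀), s ∈ Set.Icc a b ∧ κ ≤ χ s := by
  obtain ⟨s₀, hs₀⟩ := Function.ne_iff.1 hχne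
  have hp : 0 < χ s₀ := lt_of_le_of_ne (hχpos s₀) (Ne.symm hs₀)
  have := (isOpen_lt continuous_const hχ).mem_nhds (show s₀ ∈ {s | χ s₀ / 2 < χ s} by
    simp only [Set.mem_ofPred_eq]; linarith)
  obtain ⟨ε, hε, h⟩ := Metric.mem_nhds_iff.1 this
  refine ⟨s₀, ε / 4, χ s₀ / 2, by positivity, by positivity, fun s hs => ?_⟩
  have hs' : s ∈ Metric.ball s₀ ε := by
    rw [Metric.mem_ball, Real.dist_eq, abs_lt]
    constructor <;> linarith [hs.1, hs.2]
  have h2 : χ s₀ / 2 < χ s := h hs'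
  exact ⟨Ioo_subset_Icc_self (hχs (subset_tsupport _ (by
    simp only [Function.mem_support]; linarith))), h2.le⟩

lemma lip_const {n : ℕ} (a b : ℝ) (γ : ℝ → Euc n) (hγ : ContDiff ℝ (⊤ : ℕ∞) γ) :
    ∃ L > 0, ∀ s ∈ Set.Icc a b, ∀ t ∈ Set.Icc a b, ‖γ s - γ t‖ ≤ L * |s - t| := by
  have hd : Differentiable ℝ γ := hγ.differentiable (by simp)
  have hc : Continuous (deriv γ) := hγ.continuous_deriv (by simp)
  obtain ⟨L, hL⟩ := isCompact_Icc.exists_bound_of_continuousOn (s := Set.Icc a b) hc.continuousOn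
  refine ⟨max L 0 + 1, by positivity, fun s hs t ht => ?_⟩
  have := Convex.norm_image_sub_le_of_norm_deriv_le (f := γ) (C := max L 0 + 1) (s := Set.Icc a b)
    (x := t) (y := s)
    (fun x _ => hd x) (fun x hx => (hL x hx).trans ((le_max_left _ _).trans (by linarith)))
    (convex_Icc a b) ht hs
  simpa using this

lemma gauss_lower {n : ℕ} (a b : ℝ) (γ : ℝ → Euc n) (hγ : Continuous γ)
    (L : ℝ) (hL : 0 < L)
    (hlip : ∀ s ∈ Set.Icc a b, ∀ t ∈ Set.Icc a b, ‖γ s - γ t‖ ≤ L * |s - t|)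
    (χ : ℝ → ℝ) (hχ : Continuous χ) (hχc : HasCompactSupport χ) (hχpos : ∀ s, 0 ≤ χ s)
    (s₀ δ₀ κ : ℝ) (hδ : 0 < δ₀) (hκ : 0 < κ)
    (hs₀ : ∀ s ∈ Set.Icc s₀ (s₀ + 2 * δ₀), s ∈ Set.Icc a b ∧ κ ≤ χ s) :
    ∃ c > 0, ∀ N : ℝ, 1 ≤ N → ∀ t ∈ Set.Icc s₀ (s₀ + δ₀),
      c / N ≤ ∫ s, χ s * Real.exp (-(Real.pi * N ^ 2 / 2 * ‖γ s - γ t‖ ^ 2)) := by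
  have hpi := Real.pi_pos
  refine ⟨δ₀ * (κ * Real.exp (-(Real.pi / 2 * (L * δ₀) ^ 2))), by positivity, fun N hN t ht => ?_⟩
  have hN0 : 0 < N := by linarith
  set f : ℝ → ℝ := fun s => χ s * Real.exp (-(Real.pi * N ^ 2 / 2 * ‖γ s - γ t‖ ^ 2)) with hf
  have hfc : Continuous f := by simp only [hf]; fun_prop
  have hfi : Integrable f := hfc.integrable_of_hasCompactSupport (hχc.mul_right)
  have hf0 : ∀ s, 0 ≤ f s := fun s => mul_nonneg (hχpos s) (Real.exp_pos _).le
  have hdN : δ₀ / N ≤ δ₀ := div_le_self hδ.le hN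
  calc δ₀ * (κ * Real.exp (-(Real.pi / 2 * (L * δ₀) ^ 2))) / N
      = ∫ s in Set.Icc t (t + δ₀ / N), κ * Real.exp (-(Real.pi / 2 * (L * δ₀) ^ 2)) := by
        rw [setIntegral_const, Measure.real, Real.volume_Icc, ENNReal.toReal_ofReal (by simp; positivity)]
        simp only [smul_eq_mul]; ring
    _ ≤ ∫ s in Set.Icc t (t + δ₀ / N), f s := by
        refine setIntegral_mono_on continuous_const.integrableOn_Icc hfi.integrableOn measurableSet_Icc fun s hs => ?_
        have hs1 : s ∈ Set.Icc s₀ (s₀ + 2 * δ₀) :=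
          ⟨ht.1.trans hs.1, hs.2.trans (by linarith [ht.2])⟩
        have ht1 : t ∈ Set.Icc s₀ (s₀ + 2 * δ₀) := ⟨ht.1, by linarith [ht.2]⟩
        apply mul_le_mul (hs₀ s hs1).2 _ (Real.exp_pos _).le (hχpos s)
        apply Real.exp_le_exp.2
        have h1 := hlip s (hs₀ s hs1).1 t (hs₀ t ht1).1
        have h2 : |s - t| ≤ δ₀ / N := by
          rw [abs_of_nonneg (by linarith [hs.1])]; linarith [hs.2]
        have h3 : N * ‖γ s - γ t‖ ≤ L * δ₀ := by
          have : ‖γ s - γ t‖ ≤ L * (δ₀ / N) := h1.trans (by gcongr)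
          calc N * ‖γ s - γ t‖ ≤ N * (L * (δ₀ / N)) := by gcongr
            _ = _ := by field_simp
        have h4 := pow_le_pow_left₀ (by positivity) h3 2
        rw [mul_pow] at h4
        nlinarith
    _ ≤ ∫ s, f s := setIntegral_le_integral hfi (Filter.Eventually.of_forall hf0)

/-- the scalar kernel integral -/
def II {n : ℕ} (N : ℝ) (γ : ℝ → Euc n) (χ : ℝ → ℝ) (t : ℝ) : ℝ :=
  ∫ s, χ s * Real.exp (-(Real.pi * N ^ 2 / 2 * ‖γ s - γ t‖ ^ 2))

lemma II_continuous {n : ℕ} (N : ℝ) (γ : ℝ → Euc n) (hγ : Continuous γ) (χ : ℝ → ℝ)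
    (hχ : Continuous χ) (hχc : HasCompactSupport χ) : Continuous (II N γ χ) := by
  have hχi : Integrable χ := hχ.integrable_of_hasCompactSupport hχc
  unfold II
  refine continuous_of_dominated (bound := fun s => ‖χ s‖) ?_ ?_ hχi.norm ?_
  · intro ξ; apply Continuous.aestronglyMeasurable; fun_prop
  · intro ξ; refine Filter.Eventually.of_forall fun s => ?_
    rw [norm_mul, Real.norm_of_nonneg (Real.exp_pos _).le]
    apply mul_le_of_le_one_right (norm_nonneg _)
    rw [Real.exp_le_one_iff]
    have := Real.pi_pos
    have : 0 ≤ Real.pi * N ^ 2 / 2 * ‖γ s - γ ξ‖ ^ 2 := by positivity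
    linarith
  · refine Filter.Eventually.of_forall fun s => ?_
    fun_prop

lemma scale_pow (n : ℕ) (R : ℝ) (hR : 0 < R) :
    (R ^ 2 / 2) ^ ((n : ℝ) / 2) = (1 / 2 : ℝ) ^ ((n : ℝ) / 2) * R ^ n := by
  rw [show R ^ 2 / 2 = (1 / 2) * R ^ 2 by ring, Real.mul_rpow (by norm_num) (by positivity)]
  congr 1
  rw [← Real.rpow_natCast R 2, ← Real.rpow_mul hR.le, ← Real.rpow_natCast R n]
  congr 1; push_cast; ring

lemma Phi_zero {n : ℕ} (R : ℝ) (hR : 0 < R) (γ : ℝ → Euc n)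
    (hγ : Continuous γ) (χ : ℝ → ℝ)
    (hχ : Continuous χ) (hχc : HasCompactSupport χ) :
    Phi 0 R γ χ = (1 / 2 : ℝ) ^ ((n : ℝ) / 2) * R ^ n * ∫ t, χ t * II R γ χ t := by
  apply Complex.ofReal_injective
  rw [Phi_eq 0 le_rfl R hR γ hγ χ hχ hχc, ← integral_const_mul, ← integral_complex_ofReal]
  congr 1; ext t
  rw [PP_zero R hR γ hγ χ hχ hχc, II]
  simp only [inner_zero_right, neg_zero, ec_zero, one_mul]
  rw [show ((1 / 2 : ℝ) ^ ((n : ℝ) / 2) * R ^ n * (χ t *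
    ∫ s, χ s * Real.exp (-(Real.pi * R ^ 2 / 2 * ‖γ s - γ t‖ ^ 2)))) = χ t *
    ∫ s, ((1 / 2 : ℝ) ^ ((n : ℝ) / 2) * R ^ n) * 
      (χ s * Real.exp (-(Real.pi * R ^ 2 / 2 * ‖γ s - γ t‖ ^ 2))) by
    rw [integral_const_mul]; ring]
  rw [Complex.ofReal_mul, ← integral_complex_ofReal]
  congr 2; ext s
  rw [scale_pow n R hR]
  push_cast; ring

lemma PP_continuous {n : ℕ} (N : ℝ) (hN : 0 < N) (α : ℝ) (hα : 0 ≤ α) (γ : ℝ → Euc n)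
    (hγ : Continuous γ) (χ : ℝ → ℝ)
    (hχ : Continuous χ) (hχc : HasCompactSupport χ) (ξ₀ η : Euc n) :
    Continuous fun t => PP N α γ χ t ξ₀ η := by
  have hec := continuous_ec
  unfold PP
  refine continuous_of_dominated (bound := fun ξ => (∫ s, |χ s|) * (ww α ξ * Gw N ξ₀ ξ)) ?_ ?_
    ((ww_Gw_integrable α hα N hN ξ₀).const_mul _) ?_
  · intro t
    exact ((FF_continuous N α γ hγ χ hχ hχc t ξ₀).mul
      (Complex.continuous_ofReal.comp (Gw_continuous N η))).aestronglyMeasurable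
  · intro t; refine Filter.Eventually.of_forall fun ξ => ?_
    have e1 := FF_norm_le N α γ χ t ξ₀ ξ
    rw [norm_mul, Complex.norm_real, Real.norm_of_nonneg (Gw_pos _ _ _).le]
    exact (mul_le_of_le_one_right (norm_nonneg _) (Gw_le_one _ _ _)).trans e1
  · refine Filter.Eventually.of_forall fun ξ => ?_
    unfold FF
    fun_prop

lemma grid_average (a d : ℝ) (hd : 0 < d) (N : ℕ) (hN : 0 < N) (g : ℝ → ℂ) (hg : Continuous g)
    (B : ℝ) (h : ∀ τ ∈ Set.Icc 0 (d / N), ‖∑ ν ∈ Finset.range N, g (a + τ + ν * (d / N))‖ ≤ B) :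
    ‖∫ t in a..(a + d), g t‖ ≤ B * (d / N) := by
  have hNr : (0 : ℝ) < N := by exact_mod_cast hN
  have e1 : ∫ t in a..(a + d), g t = ∑ ν ∈ Finset.range N,
      ∫ t in (a + ν * (d / N))..(a + (ν + 1 : ℕ) * (d / N)), g t := by
    rw [intervalIntegral.sum_integral_adjacent_intervals (f := g) (a := fun ν : ℕ => a + ν * (d / N))]
    · congr 1
      · simp
      · field_simp
    · intro k _; exact hg.intervalIntegrable _ _
  have e2 : ∀ ν : ℕ, ∫ t in (a + ν * (d / N))..(a + (ν + 1 : ℕ) * (d / N)), g t =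
      ∫ τ in (0 : ℝ)..(d / N), g (a + τ + ν * (d / N)) := by
    intro ν
    have := intervalIntegral.integral_comp_add_right (a := 0) (b := d / N) g (a + ν * (d / N))
    rw [show 0 + (a + ν * (d / N)) = a + ν * (d / N) by ring,
      show d / N + (a + ν * (d / N)) = a + (ν + 1 : ℕ) * (d / N) by push_cast; ring] at this
    rw [← this]
    congr 1; ext τ; congr 1; ring
  simp_rw [e2] at e1
  rw [e1, ← intervalIntegral.integral_finsetSum]
  · have := intervalIntegral.norm_integral_le_of_norm_le_const (a := 0) (b := d / N) (C := B)
      (f := fun τ => ∑ ν ∈ Finset.range N, g (a + τ + ν * (d / N))) (fun τ hτ => ?_)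
    · rwa [sub_zero, abs_of_pos (by positivity)] at this
    · rw [uIoc_of_le (by positivity)] at hτ
      exact h τ ⟨hτ.1.le, hτ.2⟩
  · intro ν _
    apply Continuous.intervalIntegrable
    fun_prop

set_option maxHeartbeats 2000000 in
lemma cond_one {n : ℕ} (hn : 2 ≤ n) (p : ℝ≥0∞) (hp : 2 ≤ p) (α : ℝ) (hα : 0 ≤ α)
    (a b : ℝ) (hab : a < b) (γ : ℝ → Euc n) (hγs : ContDiff ℝ (⊤ : ℕ∞) γ)
    (hinj : Set.InjOn γ (Set.Icc a b))
    (hreg : ∀ s ∈ Set.Icc a b, deriv γ s ≠ 0)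
    (χ : ℝ → ℝ) (hχ : Continuous χ) (hχc : HasCompactSupport χ)
    (hχs : tsupport χ ⊆ Set.Ioo a b)
    (hχpos : ∀ s, 0 ≤ χ s) (hχne : χ ≠ 0)
    (hbdd : ∃ C : ℝ, ∀ f : SchwartzMap (Euc n) ℂ,
      sobolevNorm p α (avgOp γ χ ⇑f) ≤ ENNReal.ofReal C * eLpNorm (⇑f) p volume) :
    α ≤ (1 / p).toReal := by
  have hγ : Continuous γ := hγs.continuous
  have hχi : Integrable χ := hχ.integrable_of_hasCompactSupport hχc
  obtain ⟨c₁, hc₁, hbl⟩ := bilip a b γ hγs hinj hreg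
  obtain ⟨L, hL, hlip⟩ := lip_const a b γ hγs
  obtain ⟨s₀, δ₀, κ, hδ, hκ, hs₀⟩ := chi_pos_interval a b χ hχ hχs hχpos hχne
  obtain ⟨Cu, hCu, hup⟩ := gauss_upper a b γ hγ c₁ hc₁ hbl χ hχ hχc hχs hχpos
  obtain ⟨cl, hcl, hlo⟩ := gauss_lower a b γ hγ L hL hlip χ hχ hχc hχpos s₀ δ₀ κ hδ hκ hs₀
  obtain ⟨K, hK⟩ := hχ.bounded_above_of_compact_support hχc
  have hK0 : 0 ≤ K := (norm_nonneg _).trans (hK 0)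
  obtain ⟨Ck, hCk, hkey⟩ := keyK p hp α hα a b γ hγ c₁ hc₁ hbl χ hχ hχc hbdd (b - a)
    (by linarith) (K + 1) (by linarith)
  have hχ0 : ∀ s, s ∉ Set.Ioo a b → χ s = 0 := by
    intro s hs
    by_contra h
    exact hs (hχs (subset_tsupport _ h))
  set q := (1 / p).toReal with hq
  set X := ∫ s, χ s with hX
  have hX0 : 0 ≤ X := integral_nonneg hχpos
  set gn : ℝ := (1 / 2 : ℝ) ^ ((n : ℝ) / 2) with hgn
  have hgn0 : 0 < gn := by positivity
  have hII0 : ∀ R t, 0 ≤ II R γ χ t := fun R t =>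
    integral_nonneg fun s => mul_nonneg (hχpos s) (Real.exp_pos _).le
  have hIIi : ∀ R, Integrable fun t => χ t * II R γ χ t := fun R =>
    (hχ.mul (II_continuous R γ hγ χ hχ hχc)).integrable_of_hasCompactSupport hχc.mul_right
  -- upper bound for the unweighted energy
  have hPu : ∀ R : ℝ, 0 < R → Phi 0 R γ χ ≤ gn * (X * Cu) * R ^ (n - 1) := by
    intro R hR
    rw [Phi_zero R hR γ hγ χ hχ hχc]
    have h1 : ∫ t, χ t * II R γ χ t ≤ X * (Cu / R) := by
      rw [hX, ← integral_mul_const]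
      refine integral_mono (hIIi R) (hχi.mul_const _) fun t => ?_
      by_cases ht : t ∈ Set.Ioo a b
      · exact mul_le_mul_of_nonneg_left (hup R hR t (Ioo_subset_Icc_self ht)) (hχpos t)
      · simp [hχ0 t ht]
    have h2 : R ^ n = R ^ (n - 1) * R := by
      rw [← pow_succ]; congr 1; omega
    calc gn * R ^ n * ∫ t, χ t * II R γ χ t ≤ gn * R ^ n * (X * (Cu / R)) := by gcongr
      _ = _ := by rw [h2]; field_simp
  have hPl : ∀ R : ℝ, 1 ≤ R → gn * (δ₀ * (κ * cl)) * R ^ (n - 1) ≤ Phi 0 R γ χ := by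
    intro R hR
    have hR0 : 0 < R := by linarith
    rw [Phi_zero R hR0 γ hγ χ hχ hχc]
    have h1 : δ₀ * (κ * (cl / R)) ≤ ∫ t, χ t * II R γ χ t := by
      calc δ₀ * (κ * (cl / R)) = ∫ t in Set.Icc s₀ (s₀ + δ₀), κ * (cl / R) := by
            rw [setIntegral_const, Measure.real, Real.volume_Icc,
              ENNReal.toReal_ofReal (by simp; positivity)]
            simp only [smul_eq_mul]; ring
        _ ≤ ∫ t in Set.Icc s₀ (s₀ + δ₀), χ t * II R γ χ t := by
            refine setIntegral_mono_on continuous_const.integrableOn_Icc (hIIi R).integrableOn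
              measurableSet_Icc fun t ht => ?_
            apply mul_le_mul (hs₀ t ⟨ht.1, by linarith [ht.2]⟩).2 (hlo R hR t ht) (by positivity)
              (hχpos t)
        _ ≤ _ := setIntegral_le_integral (hIIi R)
            (Filter.Eventually.of_forall fun t => mul_nonneg (hχpos t) (hII0 R t))
    have h2 : R ^ n = R ^ (n - 1) * R := by
      rw [← pow_succ]; congr 1; omega
    calc gn * (δ₀ * (κ * cl)) * R ^ (n - 1) = gn * R ^ n * (δ₀ * (κ * (cl / R))) := by
          rw [h2]; field_simp
      _ ≤ _ := by gcongr
  -- choice of ε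
  set E := Real.exp (2 * Real.pi) with hE
  have hE0 : 0 < E := Real.exp_pos _
  set c₂ := gn * (δ₀ * (κ * cl)) with hc₂
  have hc₂0 : 0 < c₂ := by positivity
  set C₂ := gn * (X * Cu) with hC₂
  have hC₂0 : 0 ≤ C₂ := by positivity
  set ε : ℝ := min 1 (c₂ / (2 * (C₂ + 1) * E)) with hε
  have hε0 : 0 < ε := lt_min one_pos (by positivity)
  have hε1 : ε ≤ 1 := min_le_left _ _
  have hε2 : E * (C₂ * ε) ≤ c₂ / 2 := by
    have : ε ≤ c₂ / (2 * (C₂ + 1) * E) := min_le_right _ _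
    rw [le_div_iff₀ (by positivity)] at this
    nlinarith [mul_pos hE0 hε0]
  apply le_of_add_le_add_left (a := (n : ℝ) - 1)
  refine exponent_le _ _ (ε ^ α * (c₂ / 2)) (Ck * (b - a)) (by positivity) 0 fun N _ hN => ?_
  have hNr : (0 : ℝ) < N := by exact_mod_cast hN
  have hN1 : (1 : ℝ) ≤ N := by exact_mod_cast hN
  have hpn : (N : ℝ) ^ (n - 1) = (N : ℝ) ^ ((n : ℝ) - 1) := by
    rw [← Real.rpow_natCast]; congr 1
    rw [Nat.cast_sub (by omega)]; simp
  -- lower bound for the weighted energy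
  have hlower : (ε * N) ^ α * (Phi 0 N γ χ - E * Phi 0 (ε * N) γ χ) ≤ Phi α N γ χ := by
    have hεN : 0 < ε * N := by positivity
    have i1 := Phi_integrable 0 le_rfl (N : ℝ) hNr γ hγ χ hχ hχc
    have i2 := Phi_integrable 0 le_rfl (ε * N) hεN γ hγ χ hχ hχc
    have i3 := Phi_integrable α hα (N : ℝ) hNr γ hγ χ hχ hχc
    unfold Phi
    rw [← integral_const_mul, ← integral_sub i1 (i2.const_mul _), ← integral_const_mul]
    refine integral_mono ((i1.sub (i2.const_mul E)).const_mul _) i3 fun ξ => ?_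
    simp only [ww_zero, one_mul]
    set A := ‖mm γ χ ξ‖ ^ 2
    have hA : 0 ≤ A := by positivity
    rw [Gw_sq, Gw_sq]
    simp only [sub_zero]
    set G := Real.exp (-(2 * Real.pi / (N : ℝ) ^ 2 * ‖ξ‖ ^ 2)) with hG
    set G' := Real.exp (-(2 * Real.pi / (ε * N) ^ 2 * ‖ξ‖ ^ 2)) with hG'
    have hG0 : 0 < G := Real.exp_pos _
    have hG'0 : 0 < G' := Real.exp_pos _
    have hG1 : G ≤ 1 := by
      rw [hG, Real.exp_le_one_iff]
      have := Real.pi_pos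
      have : 0 ≤ 2 * Real.pi / (N : ℝ) ^ 2 * ‖ξ‖ ^ 2 := by positivity
      linarith
    by_cases hξ : ε * N ≤ ‖ξ‖
    · have hw : (ε * N) ^ α ≤ ww α ξ := by
        unfold ww
        calc (ε * N) ^ α = ((ε * N) ^ (2 : ℕ)) ^ (α / 2) := by
              rw [← Real.rpow_natCast, ← Real.rpow_mul hεN.le]; congr 1; push_cast; ring
          _ ≤ _ := by
              apply Real.rpow_le_rpow (by positivity) _ (by positivity)
              nlinarith
      calc (ε * N) ^ α * (A * G - E * (A * G')) ≤ (ε * N) ^ α * (A * G) := by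
            apply mul_le_mul_of_nonneg_left _ (by positivity)
            have : 0 ≤ E * (A * G') := by positivity
            linarith
        _ ≤ ww α ξ * (A * G) := by gcongr
        _ = _ := by ring
    · push Not at hξ
      have h1 : 1 ≤ E * G' := by
        rw [hE, hG', ← Real.exp_add, Real.one_le_exp_iff]
        have h3 : ‖ξ‖ ^ 2 ≤ (ε * N) ^ 2 := pow_le_pow_left₀ (norm_nonneg _) hξ.le 2
        have h4 : 2 * Real.pi / (ε * N) ^ 2 * ‖ξ‖ ^ 2 ≤ 2 * Real.pi := by
          rw [div_mul_eq_mul_div, div_le_iff₀ (by positivity)]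
          have := Real.pi_pos
          nlinarith
        linarith
      have h2 : (ε * N) ^ α * (A * G - E * (A * G')) ≤ 0 := by
        apply mul_nonpos_of_nonneg_of_nonpos (by positivity)
        nlinarith
      refine h2.trans ?_
      have := (ww_pos α ξ).le
      positivity
  -- upper bound via the key lemma
  have hupper : Phi α N γ χ ≤ Ck * (N : ℝ) ^ ((n : ℝ) + q) * ((b - a) / N) := by
    have h0 : 0 ≤ Phi α N γ χ := by
      unfold Phi
      refine integral_nonneg fun ξ => ?_
      have e1 := (ww_pos α ξ).le
      have e2 := (Gw_pos (N : ℝ) 0 ξ).le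
      positivity
    have e := Phi_eq α hα (N : ℝ) hNr γ hγ χ hχ hχc
    set g : ℝ → ℂ := fun t => (χ t : ℂ) * PP N α γ χ t 0 0 with hg
    have hgc : Continuous g :=
      (Complex.continuous_ofReal.comp hχ).mul (PP_continuous (N : ℝ) hNr α hα γ hγ χ hχ hχc 0 0)
    have e2 : ∫ t, g t = ∫ t in a..(a + (b - a)), g t := by
      rw [add_sub_cancel, intervalIntegral.integral_of_le hab.le]
      refine (setIntegral_eq_integral_of_forall_compl_eq_zero fun t ht => ?_).symm
      have : χ t = 0 := hχ0 t fun h => ht (Ioo_subset_Ioc_self h)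
      simp [hg, this]
    have e3 : Phi α N γ χ = ‖∫ t, g t‖ := by
      rw [← e, Complex.norm_real, Real.norm_of_nonneg h0]
    rw [e3, e2]
    refine grid_average a (b - a) (by linarith) N hN g hgc _ fun τ hτ => ?_
    have hh : 0 < (b - a) / N := div_pos (by linarith) hNr
    have hmem : ∀ ν < N, a + τ + ν * ((b - a) / N) ∈ Set.Icc a b := by
      intro ν hν
      have h1 : (0 : ℝ) ≤ ν * ((b - a) / N) := by positivity
      have h2 : ((ν : ℝ) + 1) * ((b - a) / N) ≤ N * ((b - a) / N) := by
        apply mul_le_mul_of_nonneg_right _ hh.le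
        exact_mod_cast hν
      have h3 : N * ((b - a) / N) = b - a := by field_simp
      constructor
      · linarith [hτ.1]
      · nlinarith [hτ.2]
    have := hkey N hN (a + τ) hmem (fun ν => χ (a + τ + ν * ((b - a) / N)))
      (fun ν => (hK _).trans (by linarith)) (fun _ => 0) (fun _ => 0) 1 1 (by norm_num)
      (by simp [Gw])
    simpa [hg] using this
  have h3 : c₂ / 2 * (N : ℝ) ^ (n - 1) ≤ Phi 0 N γ χ - E * Phi 0 (ε * N) γ χ := by
    have h4 := hPl N hN1
    have h5 := hPu (ε * N) (by positivity)
    have h6 : ε ^ (n - 1) ≤ ε := by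
      calc ε ^ (n - 1) ≤ ε ^ 1 := pow_le_pow_of_le_one hε0.le hε1 (by omega)
        _ = ε := pow_one _
    rw [mul_pow] at h5
    have h7 : E * Phi 0 (ε * N) γ χ ≤ c₂ / 2 * (N : ℝ) ^ (n - 1) := by
      calc E * Phi 0 (ε * N) γ χ ≤ E * (C₂ * (ε ^ (n - 1) * (N : ℝ) ^ (n - 1))) := by gcongr
        _ ≤ E * (C₂ * (ε * (N : ℝ) ^ (n - 1))) := by gcongr
        _ = E * (C₂ * ε) * (N : ℝ) ^ (n - 1) := by ring
        _ ≤ _ := by gcongr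
    linarith
  calc ε ^ α * (c₂ / 2) * (N : ℝ) ^ ((n : ℝ) - 1 + α)
      = (ε * N) ^ α * (c₂ / 2 * (N : ℝ) ^ (n - 1)) := by
        rw [Real.rpow_add hNr, ← hpn, Real.mul_rpow hε0.le hNr.le]; ring
    _ ≤ (ε * N) ^ α * (Phi 0 N γ χ - E * Phi 0 (ε * N) γ χ) := by gcongr
    _ ≤ _ := hlower
    _ ≤ _ := hupper
    _ = Ck * (b - a) * (N : ℝ) ^ ((n : ℝ) - 1 + q) := by
        rw [show (n : ℝ) + q = ((n : ℝ) - 1 + q) + 1 by ring, Real.rpow_add hNr, Real.rpow_one]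
        field_simp

lemma taylor_inner {n : ℕ} (a b t : ℝ) (ht : t ∈ Set.Icc a b) (v : Euc n) (C : ℝ) (m : ℕ) :
    ∀ f : ℝ → Euc n, ContDiff ℝ (⊤ : ℕ∞) f →
      (∀ k < m, ⟪iteratedDeriv k f t, v⟫ = 0) →
      (∀ u ∈ Set.Icc a b, |⟪iteratedDeriv m f u, v⟫| ≤ C) →
      ∀ s ∈ Set.Icc a b, |⟪f s, v⟫| ≤ C * |s - t| ^ m := by
  induction m with
  | zero =>
    intro f _ _ h s hs
    simpa using h s hs
  | succ m ih =>
    intro f hf h0 hC s hs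
    have hf' : ContDiff ℝ (⊤ : ℕ∞) (deriv f) := by
      have := hf.iterate_deriv 1
      simpa using this
    have h1 := ih (deriv f) hf' (fun k hk => by
      rw [← iteratedDeriv_succ']; exact h0 (k + 1) (by omega)) (fun u hu => by
      rw [← iteratedDeriv_succ']; exact hC u hu)
    have hd : ∀ u, HasDerivAt (fun u => ⟪f u, v⟫) ⟪deriv f u, v⟫ u := by
      intro u
      have := ((hf.differentiable (by simp)) u).hasDerivAt.inner ℝ (hasDerivAt_const u v)
      simpa using this
    have hsub : Set.uIcc t s ⊆ Set.Icc a b := Set.uIcc_subset_Icc ht hs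
    have hC0 : 0 ≤ C := (abs_nonneg _).trans (hC t ht)
    have h2 := Convex.norm_image_sub_le_of_norm_hasDerivWithin_le (f := fun u => ⟪f u, v⟫)
      (f' := fun u => ⟪deriv f u, v⟫) (s := Set.uIcc t s) (C := C * |s - t| ^ m) (x := t) (y := s)
      (fun u _ => (hd u).hasDerivWithinAt) (fun u hu => by
        refine (h1 u (hsub hu)).trans ?_
        have : |u - t| ≤ |s - t| := Set.abs_sub_left_of_mem_uIcc hu
        gcongr) (convex_uIcc t s) Set.left_mem_uIcc Set.right_mem_uIcc
    have h3 := h0 0 (by omega)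
    simp only [iteratedDeriv_zero] at h3
    simp only [h3, sub_zero, Real.norm_eq_abs] at h2
    rw [pow_succ, ← mul_assoc]; exact h2

lemma iteratedDeriv_smooth {n : ℕ} (γ : ℝ → Euc n) (hγ : ContDiff ℝ (⊤ : ℕ∞) γ) (k : ℕ) :
    ContDiff ℝ (⊤ : ℕ∞) (iteratedDeriv k γ) := by
  rw [iteratedDeriv_eq_iterate]
  exact hγ.iterate_deriv k

lemma dual_vector {n : ℕ} (hn : 2 ≤ n) (a b : ℝ) (γ : ℝ → Euc n) (hγ : ContDiff ℝ (⊤ : ℕ∞) γ)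
    (hnd : NonDeg γ (Set.Icc a b)) :
    ∃ e : ℝ → Euc n, ContinuousOn e (Set.Icc a b) ∧
      (∀ t ∈ Set.Icc a b, ∀ k, 1 ≤ k → k < n → ⟪iteratedDeriv k γ t, e t⟫ = 0) ∧
      (∀ t ∈ Set.Icc a b, ⟪iteratedDeriv n γ t, e t⟫ = 1) := by
  obtain ⟨c₀, hc₀, hdet⟩ := hnd
  set M : ℝ → Matrix (Fin n) (Fin n) ℝ := fun s =>
    Matrix.of fun i j : Fin n => iteratedDeriv ((j : ℕ) + 1) γ s i with hM
  have hdet0 : ∀ s ∈ Set.Icc a b, (M s).det ≠ 0 := by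
    intro s hs h
    have := hdet s hs
    change c₀ ≤ |(M s).det| at this
    rw [h, abs_zero] at this
    linarith
  have hMc : Continuous M := by
    refine continuous_matrix fun i j => ?_
    have := (iteratedDeriv_smooth γ hγ ((j : ℕ) + 1)).continuous
    simp only [hM, Matrix.of_apply]
    fun_prop
  set l : Fin n := ⟨n - 1, by omega⟩ with hl
  have key : ∀ t ∈ Set.Icc a b, ∀ j : Fin n,
      ⟪iteratedDeriv ((j : ℕ) + 1) γ t, WithLp.toLp 2 fun i => (M t)⁻¹ l i⟫ =
        if l = j then 1 else 0 := by
    intro t ht j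
    have h1 : (M t)⁻¹ * M t = 1 := Matrix.nonsing_inv_mul _ (isUnit_iff_ne_zero.2 (hdet0 t ht))
    have h2 := congrFun (congrFun h1 l) j
    rw [Matrix.mul_apply, Matrix.one_apply] at h2
    rw [← h2, PiLp.inner_apply]
    refine Finset.sum_congr rfl fun i _ => ?_
    simp [hM]
  refine ⟨fun t => WithLp.toLp 2 fun i => (M t)⁻¹ l i, ?_, ?_, ?_⟩
  · apply (PiLp.continuous_toLp 2 _).comp_continuousOn
    refine continuousOn_pi.2 fun i => ?_
    simp_rw [Matrix.inv_def, Matrix.smul_apply, Ring.inverse_eq_inv', smul_eq_mul]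
    apply ContinuousOn.mul
    · exact (hMc.matrix_det.continuousOn).inv₀ hdet0
    · exact (hMc.matrix_adjugate.matrix_elem l i).continuousOn
  · intro t ht k hk1 hk2
    have := key t ht ⟨k - 1, by omega⟩
    simp only [hl, Fin.mk.injEq] at this
    rw [show k - 1 + 1 = k by omega, if_neg (by omega)] at this
    exact this
  · intro t ht
    have := key t ht l
    simp only [if_true] at this
    rw [show (l : ℕ) + 1 = n by simp only [hl]; omega] at this
    exact this

lemma geometry {n : ℕ} (hn : 2 ≤ n) (a b : ℝ) (hab : a < b) (γ : ℝ → Euc n)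
    (hγ : ContDiff ℝ (⊤ : ℕ∞) γ) (hnd : NonDeg γ (Set.Icc a b)) :
    ∃ (e : ℝ → Euc n) (CT ce Ce cs δs : ℝ), 0 < CT ∧ 0 < ce ∧ 0 < Ce ∧ 0 < cs ∧ 0 < δs ∧
      (∀ t ∈ Set.Icc a b, ce ≤ ‖e t‖ ∧ ‖e t‖ ≤ Ce) ∧
      (∀ s ∈ Set.Icc a b, ∀ t ∈ Set.Icc a b, |⟪γ s - γ t, e t⟫| ≤ CT * |s - t| ^ n) ∧
      (∀ s ∈ Set.Icc a b, ∀ t ∈ Set.Icc a b, |s - t| ≤ δs → cs * |s - t| ≤ ‖e s - e t‖) := by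
  obtain ⟨e, hec, he0, he1⟩ := dual_vector hn a b γ hγ hnd
  obtain ⟨Ce, hCe⟩ := isCompact_Icc.exists_bound_of_continuousOn hec
  obtain ⟨Cn, hCn⟩ := isCompact_Icc.exists_bound_of_continuousOn (s := Set.Icc a b)
    (iteratedDeriv_smooth γ hγ n).continuous.continuousOn
  obtain ⟨Cm, hCm⟩ := isCompact_Icc.exists_bound_of_continuousOn (s := Set.Icc a b)
    (iteratedDeriv_smooth γ hγ (n - 1)).continuous.continuousOn
  obtain ⟨L, hL, hlip⟩ := lip_const a b _ (iteratedDeriv_smooth γ hγ n)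
  have ha : a ∈ Set.Icc a b := ⟨le_rfl, hab.le⟩
  have hCe0 : 0 ≤ Ce := (norm_nonneg _).trans (hCe a ha)
  have hCn0 : 0 ≤ Cn := (norm_nonneg _).trans (hCn a ha)
  have hCm0 : 0 ≤ Cm := (norm_nonneg _).trans (hCm a ha)
  have hsep : ∀ s ∈ Set.Icc a b, ∀ t ∈ Set.Icc a b, t ≤ s → s - t ≤ 1 / (2 * L * (Ce + 1)) →
      1 / (2 * (Cm + 1)) * (s - t) ≤ ‖e s - e t‖ := by
    intro s hs t ht hts hst
    have hsub : Set.Icc t s ⊆ Set.Icc a b := Set.Icc_subset_Icc ht.1 hs.2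
    have hd : ∀ u, HasDerivAt (fun u => ⟪iteratedDeriv (n - 1) γ u, e t⟫)
        ⟪iteratedDeriv n γ u, e t⟫ u := by
      intro u
      have := (((iteratedDeriv_smooth γ hγ (n - 1)).differentiable (by simp)) u).hasDerivAt.inner ℝ
        (hasDerivAt_const u (e t))
      rw [← iteratedDeriv_succ, show n - 1 + 1 = n by omega] at this
      simpa using this
    have hlow : ∀ u ∈ Set.Icc t s, 1 / 2 ≤ ⟪iteratedDeriv n γ u, e t⟫ := by
      intro u hu
      have h1 := hlip u (hsub hu) t ht
      have h2 : |⟪iteratedDeriv n γ u - iteratedDeriv n γ t, e t⟫| ≤ 1 / 2 := by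
        refine (abs_real_inner_le_norm _ _).trans ?_
        have h3 : |u - t| ≤ 1 / (2 * L * (Ce + 1)) := by
          rw [abs_of_nonneg (by linarith [hu.1])]; linarith [hu.2]
        calc ‖iteratedDeriv n γ u - iteratedDeriv n γ t‖ * ‖e t‖
            ≤ (L * (1 / (2 * L * (Ce + 1)))) * (Ce + 1) := by
              gcongr
              · exact h1.trans (by gcongr)
              · linarith [hCe t ht]
          _ = 1 / 2 := by field_simp
      rw [inner_sub_left, he1 t ht] at h2
      linarith [(abs_le.1 h2).1]
    have h4 := Convex.mul_sub_le_image_sub_of_le_deriv (D := Set.Icc t s) (convex_Icc t s)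
      (f := fun u => ⟪iteratedDeriv (n - 1) γ u, e t⟫) (C := 1 / 2)
      (fun u _ => (hd u).continuousAt.continuousWithinAt)
      (fun u _ => (hd u).differentiableAt.differentiableWithinAt)
      (fun u hu => by rw [(hd u).deriv]; exact hlow u (interior_subset hu))
      t ⟨le_rfl, hts⟩ s ⟨hts, le_rfl⟩ hts
    rw [he0 t ht (n - 1) (by omega) (by omega), sub_zero] at h4
    have h5 : ⟪iteratedDeriv (n - 1) γ s, e t⟫ = ⟪iteratedDeriv (n - 1) γ s, e t - e s⟫ := by
      rw [inner_sub_right, he0 s hs (n - 1) (by omega) (by omega), sub_zero]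
    rw [h5] at h4
    have h6 := h4.trans ((le_abs_self _).trans (abs_real_inner_le_norm _ _))
    rw [norm_sub_rev (e t)] at h6
    have h7 : 1 / 2 * (s - t) ≤ (Cm + 1) * ‖e s - e t‖ := by
      refine h6.trans ?_
      gcongr
      linarith [hCm s hs]
    calc 1 / (2 * (Cm + 1)) * (s - t) = (1 / 2 * (s - t)) / (Cm + 1) := by field_simp
      _ ≤ _ := by rw [div_le_iff₀ (by positivity)]; linarith
  refine ⟨e, Cn * Ce + 1, 1 / (Cn + 1), Ce + 1, 1 / (2 * (Cm + 1)), 1 / (2 * L * (Ce + 1)),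
    by positivity, by positivity, by positivity, by positivity, by positivity, ?_, ?_, ?_⟩
  · intro t ht
    refine ⟨?_, by linarith [hCe t ht]⟩
    have h1 : 1 ≤ ‖iteratedDeriv n γ t‖ * ‖e t‖ := by
      rw [← he1 t ht]; exact real_inner_le_norm _ _
    rw [div_le_iff₀ (by positivity)]
    nlinarith [hCn t ht, norm_nonneg (e t)]
  · intro s hs t ht
    have hit : ∀ k, 1 ≤ k → iteratedDeriv k (fun u => γ u - γ t) = iteratedDeriv k γ := by
      intro k hk
      obtain ⟨j, rfl⟩ := Nat.exists_eq_add_of_le' hk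
      rw [iteratedDeriv_succ', iteratedDeriv_succ']
      congr 1; ext1 u
      exact deriv_sub_const _
    refine taylor_inner a b t ht (e t) (Cn * Ce + 1) n (fun u => γ u - γ t)
      (hγ.sub contDiff_const) ?_ ?_ s hs
    · intro k hk
      rcases Nat.eq_zero_or_pos k with rfl | hk0
      · simp
      · rw [hit k hk0]; exact he0 t ht k hk0 hk
    · intro u hu
      rw [hit n (by omega)]
      refine (abs_real_inner_le_norm _ _).trans ?_
      have := mul_le_mul (hCn u hu) (hCe t ht) (norm_nonneg _) hCn0
      linarith
  · intro s hs t ht hst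
    rcases le_total t s with h | h
    · rw [abs_of_nonneg (by linarith)] at hst ⊢
      exact hsep s hs t ht h hst
    · rw [abs_of_nonpos (by linarith), neg_sub] at hst ⊢
      rw [norm_sub_rev]
      exact hsep t ht s hs h hst

lemma abs_rpow_sub_one_le (x α : ℝ) (hx : 0 ≤ x) (hα : 0 ≤ α) (hα1 : α ≤ 1) :
    |x ^ α - 1| ≤ |x - 1| := by
  rcases le_total 1 x with h | h
  · have h1 : 1 ≤ x ^ α := Real.one_le_rpow h hα
    have h2 : x ^ α ≤ x := by
      calc x ^ α ≤ x ^ (1 : ℝ) := Real.rpow_le_rpow_of_exponent_le h hα1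
        _ = x := Real.rpow_one x
    rw [abs_of_nonneg (by linarith), abs_of_nonneg (by linarith)]; linarith
  · have h1 : x ^ α ≤ 1 := Real.rpow_le_one hx h hα
    have h2 : x ≤ x ^ α := by
      rcases hx.eq_or_lt with rfl | hx
      · positivity
      calc x = x ^ (1 : ℝ) := (Real.rpow_one x).symm
        _ ≤ _ := Real.rpow_le_rpow_of_exponent_ge hx h hα1
    rw [abs_of_nonpos (by linarith), abs_of_nonpos (by linarith)]; linarith

lemma ww_eq_sqrt {n : ℕ} (α : ℝ) (ξ : Euc n) : ww α ξ = (√(1 + ‖ξ‖ ^ 2)) ^ α := by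
  rw [ww, Real.sqrt_eq_rpow, ← Real.rpow_mul (by positivity)]
  congr 1; ring

lemma ww_diff {n : ℕ} (α : ℝ) (hα : 0 ≤ α) (hα1 : α ≤ 1) (ξ ξ' : Euc n) (h : ξ' ≠ 0) :
    |ww α ξ - ww α ξ'| ≤ ww α ξ' * (‖ξ - ξ'‖ / ‖ξ'‖) := by
  have hn : 0 < ‖ξ'‖ := norm_pos_iff.2 h
  set u := √(1 + ‖ξ‖ ^ 2) with hu
  set v := √(1 + ‖ξ'‖ ^ 2) with hv
  have hu2 : u ^ 2 = 1 + ‖ξ‖ ^ 2 := Real.sq_sqrt (by positivity)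
  have hv2 : v ^ 2 = 1 + ‖ξ'‖ ^ 2 := Real.sq_sqrt (by positivity)
  have hu0 : 0 ≤ u := Real.sqrt_nonneg _
  have hv0 : 0 < v := Real.sqrt_pos.2 (by positivity)
  have hun : ‖ξ‖ ≤ u := by
    apply Real.le_sqrt_of_sq_le; linarith
  have hvn : ‖ξ'‖ ≤ v := by
    apply Real.le_sqrt_of_sq_le; linarith
  have huv : |u - v| ≤ ‖ξ - ξ'‖ := by
    have h1 : |u - v| * (u + v) = |‖ξ‖ - ‖ξ'‖| * (‖ξ‖ + ‖ξ'‖) := by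
      rw [← abs_of_nonneg (by positivity : 0 ≤ u + v), ← abs_mul,
        ← abs_of_nonneg (by positivity : 0 ≤ ‖ξ‖ + ‖ξ'‖), ← abs_mul]
      congr 1; nlinarith
    have h2 : |u - v| * (u + v) ≤ |‖ξ‖ - ‖ξ'‖| * (u + v) := by
      rw [h1]; gcongr
    have h3 := le_of_mul_le_mul_right h2 (by positivity)
    exact h3.trans (abs_norm_sub_norm_le _ _)
  rw [ww_eq_sqrt, ww_eq_sqrt, ← hu, ← hv]
  have e1 : u ^ α - v ^ α = v ^ α * ((u / v) ^ α - 1) := by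
    rw [Real.div_rpow hu0 hv0.le]
    have : 0 < v ^ α := by positivity
    field_simp
  rw [e1, abs_mul, abs_of_pos (by positivity : 0 < v ^ α)]
  apply mul_le_mul_of_nonneg_left _ (by positivity)
  refine (abs_rpow_sub_one_le _ α (by positivity) hα hα1).trans ?_
  rw [show u / v - 1 = (u - v) / v by field_simp, abs_div, abs_of_pos hv0]
  gcongr

lemma gauss_total {n : ℕ} (b : ℝ) (hb : 0 < b) (ξ₀ : Euc n) :
    Integrable (fun ξ : Euc n => Real.exp (-(b * ‖ξ - ξ₀‖ ^ 2))) ∧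
    ∫ ξ : Euc n, Real.exp (-(b * ‖ξ - ξ₀‖ ^ 2)) = (Real.pi / b) ^ ((n : ℝ) / 2) := by
  constructor
  · simpa using gauss_integrable (n := n) b hb 0 ξ₀
  · have := gauss_fourier (n := n) b hb ξ₀ 0
    simp only [inner_zero_left, neg_zero, ec_zero, one_mul, norm_zero] at this
    rw [integral_complex_ofReal] at this
    have h2 := Complex.ofReal_injective this
    rw [h2]; simp

lemma sq_rpow_half (n : ℕ) (R : ℝ) (hR : 0 < R) : (R ^ 2) ^ ((n : ℝ) / 2) = R ^ n := by
  rw [← Real.rpow_natCast R 2, ← Real.rpow_mul hR.le, ← Real.rpow_natCast R n]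
  congr 1; push_cast; ring

/-- replacing the weight by its value at the centre -/
lemma PP_diag_error {n : ℕ} (N : ℝ) (hN : 0 < N) (α : ℝ) (hα : 0 ≤ α) (hα1 : α ≤ 1)
    (γ : ℝ → Euc n) (hγ : Continuous γ) (χ : ℝ → ℝ) (hχ : Continuous χ)
    (hχc : HasCompactSupport χ) (t : ℝ) (ξ₀ : Euc n) (hξ₀ : ξ₀ ≠ 0) :
    ‖PP N α γ χ t ξ₀ ξ₀ - (ww α ξ₀ : ℂ) * PP N 0 γ χ t ξ₀ ξ₀‖ ≤
      (∫ s, |χ s|) * ww α ξ₀ * (N ^ (n + 1) / ‖ξ₀‖) := by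
  have hpi := Real.pi_pos
  have hn0 : 0 < ‖ξ₀‖ := norm_pos_iff.2 hξ₀
  have hintg : ∀ β : ℝ, 0 ≤ β → Integrable fun ξ => FF N β γ χ t ξ₀ ξ * (Gw N ξ₀ ξ : ℂ) := by
    intro β hβ
    refine (FF_integrable N hN β hβ γ hγ χ hχ hχc t ξ₀).mul_bdd (c := 1)
        (Complex.continuous_ofReal.comp (Gw_continuous N ξ₀)).aestronglyMeasurable
        (Filter.Eventually.of_forall fun x => ?_)
    rw [Complex.norm_real, Real.norm_of_nonneg (Gw_pos _ _ _).le]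
    exact Gw_le_one _ _ _
  unfold PP
  rw [← integral_const_mul, ← integral_sub (hintg α hα) ((hintg 0 le_rfl).const_mul _)]
  obtain ⟨hgi, hge⟩ := gauss_total (n := n) (Real.pi / N ^ 2) (by positivity) ξ₀
  have e1 : Real.pi / (Real.pi / N ^ 2) = N ^ 2 := by field_simp
  rw [e1, sq_rpow_half n N hN] at hge
  set X := ∫ s, |χ s| with hX
  have hX0 : 0 ≤ X := integral_nonneg fun s => abs_nonneg _
  have hw0 := (ww_pos α ξ₀).le
  calc ‖∫ ξ, (FF N α γ χ t ξ₀ ξ * (Gw N ξ₀ ξ : ℂ) -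
        (ww α ξ₀ : ℂ) * (FF N 0 γ χ t ξ₀ ξ * (Gw N ξ₀ ξ : ℂ)))‖
      ≤ ∫ ξ, (X * ww α ξ₀ * (N / ‖ξ₀‖)) * Real.exp (-(Real.pi / N ^ 2 * ‖ξ - ξ₀‖ ^ 2)) := by
        refine norm_integral_le_of_norm_le (hgi.const_mul _) (Filter.Eventually.of_forall fun ξ => ?_)
        have e2 : FF N α γ χ t ξ₀ ξ * (Gw N ξ₀ ξ : ℂ) -
            (ww α ξ₀ : ℂ) * (FF N 0 γ χ t ξ₀ ξ * (Gw N ξ₀ ξ : ℂ)) =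
            ((ww α ξ - ww α ξ₀ : ℝ) : ℂ) * (mm γ χ ξ * (ec ⟪γ t, ξ⟫ *
              ((Gw N ξ₀ ξ * Gw N ξ₀ ξ : ℝ) : ℂ))) := by
          unfold FF
          rw [ww_zero]
          push_cast; ring
        have hG := Gw_pos N ξ₀ ξ
        rw [e2, norm_mul, norm_mul, norm_mul, norm_ec, one_mul, Complex.norm_real, Complex.norm_real,
          Real.norm_eq_abs, Real.norm_of_nonneg (by positivity)]
        set r := ‖ξ - ξ₀‖ with hr
        have hr0 : 0 ≤ r := norm_nonneg _
        have h1 := ww_diff α hα hα1 ξ ξ₀ hξ₀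
        have h2 := norm_mm_le γ χ ξ
        have h3 : r * Gw N ξ₀ ξ ≤ N := by
          unfold Gw
          rw [← hr, Real.exp_neg, ← div_eq_mul_inv, div_le_iff₀ (Real.exp_pos _)]
          have h4 := Real.add_one_le_exp (Real.pi / N ^ 2 * r ^ 2)
          have h5 : r ≤ N * (Real.pi / N ^ 2 * r ^ 2 + 1) := by
            have : N * (Real.pi / N ^ 2 * r ^ 2 + 1) = (Real.pi * r ^ 2 + N ^ 2) / N := by
              field_simp
            rw [this, le_div_iff₀ hN]
            nlinarith [sq_nonneg (r - N), Real.pi_gt_three, sq_nonneg r]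
          exact h5.trans (by gcongr)
        change _ ≤ X * ww α ξ₀ * (N / ‖ξ₀‖) * Gw N ξ₀ ξ
        calc |ww α ξ - ww α ξ₀| * (‖mm γ χ ξ‖ * (Gw N ξ₀ ξ * Gw N ξ₀ ξ))
            ≤ (ww α ξ₀ * (r / ‖ξ₀‖)) * (X * (Gw N ξ₀ ξ * Gw N ξ₀ ξ)) := by gcongr
          _ = X * ww α ξ₀ * ((r * Gw N ξ₀ ξ) / ‖ξ₀‖) * Gw N ξ₀ ξ := by ring
          _ ≤ _ := by gcongr
    _ = _ := by
        rw [integral_const_mul, hge]; ring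

lemma one_sub_abs_le_cos (x : ℝ) : 1 - |x| ≤ Real.cos x := by
  rcases le_total |x| 2 with h | h
  · have := Real.one_sub_sq_div_two_le_cos (x := x)
    nlinarith [sq_abs x, abs_nonneg x]
  · linarith [Real.neg_one_le_cos x]

/-- main diagonal term -/
lemma PP_zero_re {n : ℕ} (a b : ℝ) (γ : ℝ → Euc n) (hγ : Continuous γ)
    (c₁ : ℝ) (hc₁ : 0 < c₁)
    (hbl : ∀ s ∈ Set.Icc a b, ∀ t ∈ Set.Icc a b, c₁ * |s - t| ≤ ‖γ s - γ t‖)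
    (χ : ℝ → ℝ) (hχ : Continuous χ) (hχc : HasCompactSupport χ)
    (hχs : tsupport χ ⊆ Set.Ioo a b) (hχpos : ∀ s, 0 ≤ χ s)
    (e : ℝ → Euc n) (CT : ℝ) (hCT : 0 < CT)
    (hT : ∀ s ∈ Set.Icc a b, ∀ t ∈ Set.Icc a b, |⟪γ s - γ t, e t⟫| ≤ CT * |s - t| ^ n) :
    ∃ C > 0, ∀ N : ℝ, 0 < N → ∀ ε : ℝ, 0 < ε → ∀ t ∈ Set.Icc a b,
      (1 / 2 : ℝ) ^ ((n : ℝ) / 2) * N ^ n * (II N γ χ t - ε * (C / N)) ≤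
      (PP N 0 γ χ t ((ε * N ^ n) • e t) ((ε * N ^ n) • e t)).re := by
  have hpi := Real.pi_pos
  obtain ⟨Cu, hCu, hup⟩ := gauss_upper a b γ hγ c₁ hc₁ hbl χ hχ hχc hχs hχpos
  obtain ⟨Cp, hCp, hpoly⟩ := exp_poly_bound (Real.pi * c₁ ^ 2 / 4) (by positivity) n
  refine ⟨2 * Real.pi * CT * (Cp + 1) * Cu * √2, by positivity, fun N hN ε hε t ht => ?_⟩
  have hχ0 : ∀ s, s ∉ Set.Icc a b → χ s = 0 := by
    intro s hs
    by_contra h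
    exact hs (Ioo_subset_Icc_self (hχs (subset_tsupport _ h)))
  set gn : ℝ := (1 / 2 : ℝ) ^ ((n : ℝ) / 2) with hgn
  have hgn0 : 0 < gn := by positivity
  set ker : ℝ → ℝ := fun s => χ s * Real.exp (-(Real.pi * N ^ 2 / 2 * ‖γ s - γ t‖ ^ 2)) with hker
  set ker' : ℝ → ℝ := fun s =>
    χ s * Real.exp (-(Real.pi * (N / √2) ^ 2 / 2 * ‖γ s - γ t‖ ^ 2)) with hker'
  have hki : Integrable ker :=
    Continuous.integrable_of_hasCompactSupport (by simp only [hker]; fun_prop) hχc.mul_right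
  have hk'i : Integrable ker' :=
    Continuous.integrable_of_hasCompactSupport (by simp only [hker']; fun_prop) hχc.mul_right
  have hec := continuous_ec
  rw [PP_zero N hN γ hγ χ hχ hχc]
  have hInt : Integrable fun s => (χ s : ℂ) * (ec (-⟪γ s - γ t, (ε * N ^ n) • e t⟫) *
      (((N ^ 2 / 2) ^ ((n : ℝ) / 2) * Real.exp (-(Real.pi * N ^ 2 / 2 * ‖γ s - γ t‖ ^ 2)) : ℝ) : ℂ)) := by
    apply Continuous.integrable_of_hasCompactSupport
    · fun_prop
    · exact HasCompactSupport.mul_right (hχc.comp_left (g := fun x : ℝ => (x : ℂ)) (by simp))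
  have hre : (∫ s, (χ s : ℂ) * (ec (-⟪γ s - γ t, (ε * N ^ n) • e t⟫) *
      (((N ^ 2 / 2) ^ ((n : ℝ) / 2) * Real.exp (-(Real.pi * N ^ 2 / 2 * ‖γ s - γ t‖ ^ 2)) : ℝ) : ℂ))).re
      = ∫ s, ((χ s : ℂ) * (ec (-⟪γ s - γ t, (ε * N ^ n) • e t⟫) *
      (((N ^ 2 / 2) ^ ((n : ℝ) / 2) * Real.exp (-(Real.pi * N ^ 2 / 2 * ‖γ s - γ t‖ ^ 2)) : ℝ) : ℂ))).re := by
    have := integral_re (𝕜 := ℂ) hInt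
    exact this.symm
  rw [hre]
  have hup' := hup (N / √2) (by positivity) t ht
  have h1 : ∫ s, gn * N ^ n * (ker s - ε * (2 * Real.pi * CT * (Cp + 1)) * ker' s) ≤
      ∫ s, ((χ s : ℂ) * (ec (-⟪γ s - γ t, (ε * N ^ n) • e t⟫) *
      (((N ^ 2 / 2) ^ ((n : ℝ) / 2) * Real.exp (-(Real.pi * N ^ 2 / 2 * ‖γ s - γ t‖ ^ 2)) : ℝ) : ℂ))).re := by
    refine integral_mono ((hki.sub (hk'i.const_mul _)).const_mul _) hInt.re fun s => ?_
    simp only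
    rw [Complex.re_ofReal_mul, Complex.re_mul_ofReal, re_ec, scale_pow n N hN, ← hgn]
    by_cases hs : s ∈ Set.Icc a b
    swap
    · simp [hker, hker', hχ0 s hs]
    set θ := ⟪γ s - γ t, (ε * N ^ n) • e t⟫ with hθ
    have hθb : |θ| ≤ ε * CT * (N * |s - t|) ^ n := by
      rw [hθ, inner_smul_right, abs_mul, abs_of_pos (by positivity)]
      calc ε * N ^ n * |⟪γ s - γ t, e t⟫| ≤ ε * N ^ n * (CT * |s - t| ^ n) := by
            gcongr; exact hT s hs t ht
        _ = _ := by rw [mul_pow]; ring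
    have hcos : 1 - 2 * Real.pi * |θ| ≤ Real.cos (2 * Real.pi * -θ) := by
      have := one_sub_abs_le_cos (2 * Real.pi * -θ)
      rwa [abs_mul, abs_neg, abs_of_pos (by positivity : 0 < 2 * Real.pi)] at this
    set E := Real.exp (-(Real.pi * N ^ 2 / 2 * ‖γ s - γ t‖ ^ 2)) with hE
    set E' := Real.exp (-(Real.pi * (N / √2) ^ 2 / 2 * ‖γ s - γ t‖ ^ 2)) with hE'
    have hEE : E = E' * E' := by
      rw [hE, hE', ← Real.exp_add]; congr 1
      rw [div_pow, Real.sq_sqrt (by norm_num)]; ring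
    have hE'0 : 0 < E' := Real.exp_pos _
    have hpp : (N * |s - t|) ^ n * E' ≤ Cp + 1 := by
      have h2 := hpoly (N * |s - t|) (by positivity)
      have h3 : E' ≤ Real.exp (-(Real.pi * c₁ ^ 2 / 4 * (N * |s - t|) ^ 2)) := by
        apply Real.exp_le_exp.2
        apply neg_le_neg
        have h4 := pow_le_pow_left₀ (by positivity) (hbl s hs t ht) 2
        rw [div_pow, Real.sq_sqrt (by norm_num)]
        rw [mul_pow] at h4
        have h5 := mul_le_mul_of_nonneg_left h4 (by positivity : 0 ≤ Real.pi * N ^ 2 / 4)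
        calc Real.pi * c₁ ^ 2 / 4 * (N * |s - t|) ^ 2
            = Real.pi * N ^ 2 / 4 * (c₁ ^ 2 * |s - t| ^ 2) := by ring
          _ ≤ _ := h5
          _ = _ := by ring
      have h6 : (N * |s - t|) ^ n ≤ (1 + N * |s - t|) ^ n :=
        pow_le_pow_left₀ (by positivity) (by linarith) n
      calc (N * |s - t|) ^ n * E' ≤ (1 + N * |s - t|) ^ n *
            Real.exp (-(Real.pi * c₁ ^ 2 / 4 * (N * |s - t|) ^ 2)) := by gcongr
        _ ≤ _ := h2.trans (by linarith)
    have hθE : |θ| * E ≤ ε * CT * (Cp + 1) * E' := by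
      rw [hEE]
      calc |θ| * (E' * E') ≤ (ε * CT * (N * |s - t|) ^ n) * (E' * E') := by gcongr
        _ = ε * CT * ((N * |s - t|) ^ n * E') * E' := by ring
        _ ≤ _ := by gcongr
    have hE0 : 0 < E := Real.exp_pos _
    have hfin : E - ε * (2 * Real.pi * CT * (Cp + 1)) * E' ≤ Real.cos (2 * Real.pi * -θ) * E := by
      have h7 := mul_le_mul_of_nonneg_right hcos hE0.le
      have h8 := mul_le_mul_of_nonneg_left hθE (by positivity : 0 ≤ 2 * Real.pi)
      linarith
    have h9 := mul_le_mul_of_nonneg_left hfin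
      (mul_nonneg (by positivity : 0 ≤ gn * N ^ n) (hχpos s))
    simp only [hker, hker']
    linarith
  refine le_trans ?_ h1
  rw [integral_const_mul, integral_sub hki (hk'i.const_mul _), integral_const_mul]
  apply mul_le_mul_of_nonneg_left _ (by positivity)
  change II N γ χ t - _ ≤ II N γ χ t - _
  have h10 := mul_le_mul_of_nonneg_left hup'
    (by positivity : 0 ≤ ε * (2 * Real.pi * CT * (Cp + 1)))
  have h11 : ε * (2 * Real.pi * CT * (Cp + 1)) * (Cu / (N / √2)) =
      ε * (2 * Real.pi * CT * (Cp + 1) * Cu * √2 / N) := by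
    field_simp
  rw [h11] at h10
  linarith

/-- off-diagonal terms -/
lemma PP_off {n : ℕ} (N : ℝ) (hN : 1 ≤ N) (α : ℝ) (hα : 0 ≤ α) (hα1 : α ≤ 1)
    (γ : ℝ → Euc n) (χ : ℝ → ℝ) (t : ℝ) (ξ₀ η : Euc n) :
    ‖PP N α γ χ t ξ₀ η‖ ≤ (∫ s, |χ s|) * (1 + ‖ξ₀‖) * (1 + N) * (2 ^ n * N ^ n) *
      Real.exp (-(Real.pi / (4 * N ^ 2) * ‖ξ₀ - η‖ ^ 2)) := by
  have hpi := Real.pi_pos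
  have hN0 : 0 < N := by linarith
  obtain ⟨hgi, hge⟩ := gauss_total (n := n) (Real.pi / (4 * N ^ 2)) (by positivity) ξ₀
  have e1 : Real.pi / (Real.pi / (4 * N ^ 2)) = (2 * N) ^ 2 := by field_simp; norm_num
  rw [e1, sq_rpow_half n _ (by positivity), mul_pow] at hge
  set X := ∫ s, |χ s| with hX
  have hX0 : 0 ≤ X := integral_nonneg fun s => abs_nonneg _
  set D := Real.exp (-(Real.pi / (4 * N ^ 2) * ‖ξ₀ - η‖ ^ 2)) with hD
  have hD0 : 0 < D := Real.exp_pos _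
  unfold PP
  calc ‖∫ ξ, FF N α γ χ t ξ₀ ξ * (Gw N η ξ : ℂ)‖
      ≤ ∫ ξ, (X * (1 + ‖ξ₀‖) * (1 + N) * D) * Real.exp (-(Real.pi / (4 * N ^ 2) * ‖ξ - ξ₀‖ ^ 2)) := by
        refine norm_integral_le_of_norm_le (hgi.const_mul _) (Filter.Eventually.of_forall fun ξ => ?_)
        rw [norm_mul, Complex.norm_real, Real.norm_of_nonneg (Gw_pos _ _ _).le]
        have h1 := FF_norm_le N α γ χ t ξ₀ ξ
        set r := ‖ξ - ξ₀‖ with hr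
        set r' := ‖ξ - η‖ with hr'
        have hr0 : 0 ≤ r := norm_nonneg _
        have hw : ww α ξ ≤ (1 + ‖ξ₀‖) * (1 + r) := by
          have h2 := ww_le α hα 1 (by simpa using hα1) ξ
          have h3 : ‖ξ‖ ≤ ‖ξ₀‖ + r := by simpa using norm_add_le ξ₀ (ξ - ξ₀)
          have h4 : 0 ≤ ‖ξ₀‖ * r := by positivity
          simp only [pow_one] at h2
          nlinarith
        set g := Real.exp (-(Real.pi / (4 * N ^ 2) * r ^ 2)) with hg
        have hg0 : 0 < g := Real.exp_pos _
        have hGG : Gw N ξ₀ ξ * Gw N η ξ ≤ D * (g * g) := by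
          unfold Gw
          rw [hD, hg, ← Real.exp_add, ← Real.exp_add, ← Real.exp_add]
          apply Real.exp_le_exp.2
          have h5 : ‖ξ₀ - η‖ ≤ r + r' := by
            rw [hr, norm_sub_rev ξ ξ₀]
            have := norm_add_le (ξ₀ - ξ) (ξ - η)
            simpa using this
          have h6 := pow_le_pow_left₀ (norm_nonneg _) h5 2
          have h7 : ‖ξ₀ - η‖ ^ 2 + 2 * r ^ 2 ≤ 4 * (r ^ 2 + r' ^ 2) := by
            nlinarith [sq_nonneg (r - r'), sq_nonneg r']
          have h8 := mul_le_mul_of_nonneg_left h7 (by positivity : 0 ≤ Real.pi / (4 * N ^ 2))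
          have h9 : Real.pi / (4 * N ^ 2) * (4 * (r ^ 2 + r' ^ 2)) =
            Real.pi / N ^ 2 * r ^ 2 + Real.pi / N ^ 2 * r' ^ 2 := by field_simp
          rw [h9] at h8
          linarith
        have hrg : (1 + r) * g ≤ 1 + N := by
          rw [hg, Real.exp_neg, ← div_eq_mul_inv, div_le_iff₀ (Real.exp_pos _)]
          have h4 := Real.add_one_le_exp (Real.pi / (4 * N ^ 2) * r ^ 2)
          have h5 : 1 + r ≤ (1 + N) * (Real.pi / (4 * N ^ 2) * r ^ 2 + 1) := by
            have h6 : 0 ≤ Real.pi / (4 * N ^ 2) * r ^ 2 := by positivity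
            have h7 : r ≤ N * (Real.pi / (4 * N ^ 2) * r ^ 2 + 1) := by
              have : N * (Real.pi / (4 * N ^ 2) * r ^ 2 + 1) = (Real.pi * r ^ 2 / 4 + N ^ 2) / N := by
                field_simp
              rw [this, le_div_iff₀ hN0]
              nlinarith [sq_nonneg (r / 2 - N), Real.pi_gt_three, sq_nonneg r, sq_nonneg (3 * r - 4 * N)]
            nlinarith
          exact h5.trans (by gcongr)
        have hG1 := Gw_pos N ξ₀ ξ
        have hG2 := Gw_pos N η ξ
        calc ‖FF N α γ χ t ξ₀ ξ‖ * Gw N η ξ ≤ X * (ww α ξ * Gw N ξ₀ ξ) * Gw N η ξ := by gcongr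
          _ = X * ww α ξ * (Gw N ξ₀ ξ * Gw N η ξ) := by ring
          _ ≤ X * ((1 + ‖ξ₀‖) * (1 + r)) * (D * (g * g)) := by gcongr
          _ = X * (1 + ‖ξ₀‖) * ((1 + r) * g) * D * g := by ring
          _ ≤ _ := by gcongr
    _ = _ := by
        rw [integral_const_mul, hge]; ring

lemma sum_diag_off (N : ℕ) (A : ℕ → ℕ → ℂ) (D O : ℝ) (hO : 0 ≤ O)
    (hd : ∀ ν < N, D ≤ (A ν ν).re) (ho : ∀ μ < N, ∀ ν < N, μ ≠ ν → ‖A μ ν‖ ≤ O) :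
    N * D - N * N * O ≤ ‖∑ μ ∈ Finset.range N, ∑ ν ∈ Finset.range N, A μ ν‖ := by
  refine le_trans ?_ (Complex.re_le_norm _)
  rw [Complex.re_sum]
  have h : ∀ μ ∈ Finset.range N, D - N * O ≤ (∑ ν ∈ Finset.range N, A μ ν).re := by
    intro μ hμ
    rw [Complex.re_sum]
    calc D - N * O = ∑ ν ∈ Finset.range N, ((if μ = ν then D else 0) - O) := by
          rw [Finset.sum_sub_distrib, Finset.sum_ite_eq]; simp [Finset.mem_range.1 hμ]
      _ ≤ _ := by
          refine Finset.sum_le_sum fun ν hν => ?_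
          split_ifs with e
          · subst e
            linarith [hd μ (Finset.mem_range.1 hμ)]
          · have h1 := ho μ (Finset.mem_range.1 hμ) ν (Finset.mem_range.1 hν) e
            have h2 := neg_le_of_abs_le ((Complex.abs_re_le_norm (A μ ν)).trans h1)
            linarith
  calc (N : ℝ) * D - N * N * O = ∑ μ ∈ Finset.range N, (D - N * O) := by
        simp; ring
    _ ≤ _ := Finset.sum_le_sum h

lemma sum_Gw_le {n : ℕ} (N : ℕ) (R : ℝ) (η : ℕ → Euc n) (G : ℝ) (hG : 0 ≤ G)
    (h : ∀ μ < N, ∀ ν < N, μ ≠ ν → Gw R (η μ) (η ν) ≤ G) :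
    ∑ μ ∈ Finset.range N, ∑ ν ∈ Finset.range N, Gw R (η μ) (η ν) ≤ N * (1 + N * G) := by
  calc _ ≤ ∑ μ ∈ Finset.range N, ∑ ν ∈ Finset.range N, ((if μ = ν then 1 else 0) + G) := by
        refine Finset.sum_le_sum fun μ hμ => Finset.sum_le_sum fun ν hν => ?_
        split_ifs with e
        · linarith [Gw_le_one R (η μ) (η ν)]
        · linarith [h μ (Finset.mem_range.1 hμ) ν (Finset.mem_range.1 hν) e]
    _ = ∑ μ ∈ Finset.range N, (1 + N * G) := by
        refine Finset.sum_congr rfl fun μ hμ => ?_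
        rw [Finset.sum_add_distrib, Finset.sum_ite_eq]; simp [Finset.mem_range.1 hμ]
    _ = _ := by simp; ring

lemma rpow_le_ww {n : ℕ} (α : ℝ) (hα : 0 ≤ α) (r : ℝ) (hr : 0 ≤ r) (ξ : Euc n) (h : r ≤ ‖ξ‖) :
    r ^ α ≤ ww α ξ := by
  rw [ww_eq_sqrt]
  apply Real.rpow_le_rpow hr _ hα
  apply Real.le_sqrt_of_sq_le
  nlinarith

set_option maxHeartbeats 2000000 in
lemma cond_two {n : ℕ} (hn : 3 ≤ n) (p : ℝ≥0∞) (hp : 2 ≤ p) (α : ℝ) (hα : 0 ≤ α) (hα1 : α ≤ 1)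
    (a b : ℝ) (hab : a < b) (γ : ℝ → Euc n) (hγs : ContDiff ℝ (⊤ : ℕ∞) γ)
    (hinj : Set.InjOn γ (Set.Icc a b))
    (hreg : ∀ s ∈ Set.Icc a b, deriv γ s ≠ 0)
    (hnd : NonDeg γ (Set.Icc a b))
    (χ : ℝ → ℝ) (hχ : Continuous χ) (hχc : HasCompactSupport χ)
    (hχs : tsupport χ ⊆ Set.Ioo a b)
    (hχpos : ∀ s, 0 ≤ χ s) (hχne : χ ≠ 0)
    (hbdd : ∃ C : ℝ, ∀ f : SchwartzMap (Euc n) ℂ,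
      sobolevNorm p α (avgOp γ χ ⇑f) ≤ ENNReal.ofReal C * eLpNorm (⇑f) p volume) :
    n * α ≤ 1 / 2 + (1 / p).toReal := by
  have hpi := Real.pi_pos
  have hγ : Continuous γ := hγs.continuous
  obtain ⟨c₁, hc₁, hbl⟩ := bilip a b γ hγs hinj hreg
  obtain ⟨L, hL, hlip⟩ := lip_const a b γ hγs
  obtain ⟨s₀, δ₀, κ, hδ, hκ, hs₀⟩ := chi_pos_interval a b χ hχ hχs hχpos hχne
  obtain ⟨cl, hcl, hlo⟩ := gauss_lower a b γ hγ L hL hlip χ hχ hχc hχpos s₀ δ₀ κ hδ hκ hs₀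
  obtain ⟨e, CT, ce, Ce, cs, δs, hCT, hce, hCe, hcs, hδs, he, hT, hsep⟩ :=
    geometry (by omega) a b hab γ hγs hnd
  obtain ⟨Cz, hCz, hzero⟩ := PP_zero_re a b γ hγ c₁ hc₁ hbl χ hχ hχc hχs hχpos e CT hCT hT
  set δ := min δ₀ δs with hδdef
  have hδ0 : 0 < δ := lt_min hδ hδs
  obtain ⟨Ck, hCk, hkey⟩ := keyK p hp α hα a b γ hγ c₁ hc₁ hbl χ hχ hχc hbdd δ hδ0 1 one_pos
  set q := (1 / p).toReal with hq
  set X := ∫ s, |χ s| with hX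
  have hX0 : 0 ≤ X := integral_nonneg fun s => abs_nonneg _
  set gn : ℝ := (1 / 2 : ℝ) ^ ((n : ℝ) / 2) with hgn
  have hgn0 : 0 < gn := by positivity
  set ε : ℝ := cl / (2 * Cz) with hε
  have hε0 : 0 < ε := by positivity
  have hεC : ε * Cz = cl / 2 := by rw [hε]; field_simp
  set β : ℝ := Real.pi / 4 * (ε * cs * δ) ^ 2 with hβ
  have hβ0 : 0 < β := by positivity
  obtain ⟨C1, hC1, hp1⟩ := exp_poly_bound β hβ0 1
  obtain ⟨C3, hC3, hp3⟩ := exp_poly_bound β hβ0 (2 * n + 3)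
  set B : ℝ := X * (1 + ε * Ce) * 2 ^ n * C3 with hB
  have hB0 : 0 ≤ B := by positivity
  set c : ℝ := (ε * ce) ^ α * (gn * (cl / 4)) with hc
  have hc0 : 0 < c := by positivity
  obtain ⟨N₀, hN₀⟩ := exists_nat_ge (max (2 * B / c) (4 * X / (ε * ce * gn * cl)))
  apply le_of_add_le_add_left (a := (n : ℝ))
  refine exponent_le _ _ (c / 2) (Ck * √(1 + C1)) (by positivity) N₀ fun N hNN hN => ?_
  have hNr : (0 : ℝ) < N := by exact_mod_cast hN
  have hN1 : (1 : ℝ) ≤ N := by exact_mod_cast hN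
  have hNN' : (N₀ : ℝ) ≤ N := by exact_mod_cast hNN
  have hNa : 2 * B / c ≤ N := (le_max_left _ _).trans (hN₀.trans hNN')
  have hNb : 4 * X / (ε * ce * gn * cl) ≤ N := (le_max_right _ _).trans (hN₀.trans hNN')
  rw [div_le_iff₀ hc0] at hNa
  rw [div_le_iff₀ (by positivity)] at hNb
  have hh : 0 < δ / N := by positivity
  set t : ℕ → ℝ := fun ν => s₀ + ν * (δ / N) with ht
  have hNd : N * (δ / N) = δ := by field_simp
  have htm : ∀ ν < N, t ν ∈ Set.Icc s₀ (s₀ + δ) := by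
    intro ν hν
    have h1 : (0 : ℝ) ≤ ν * (δ / N) := by positivity
    have h2 : (ν : ℝ) * (δ / N) ≤ N * (δ / N) := by
      apply mul_le_mul_of_nonneg_right _ hh.le
      exact_mod_cast hν.le
    simp only [ht]
    exact ⟨by linarith, by linarith⟩
  have hδ1 : δ ≤ δ₀ := min_le_left _ _
  have hδ2 : δ ≤ δs := min_le_right _ _
  have htab : ∀ ν < N, t ν ∈ Set.Icc a b := fun ν hν =>
    (hs₀ (t ν) ⟨(htm ν hν).1, by linarith [(htm ν hν).2]⟩).1
  set ξ : ℕ → Euc n := fun ν => (ε * (N : ℝ) ^ n) • e (t ν) with hξ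
  have hNp : (0 : ℝ) < (N : ℝ) ^ n := by positivity
  have hξn : ∀ ν, ‖ξ ν‖ = ε * (N : ℝ) ^ n * ‖e (t ν)‖ := by
    intro ν
    simp only [hξ]
    rw [norm_smul, Real.norm_of_nonneg (by positivity)]
  have hn2 : (N : ℝ) * N * N ≤ (N : ℝ) ^ n := by
    calc (N : ℝ) * N * N = (N : ℝ) ^ 3 := by ring
      _ ≤ _ := pow_le_pow_right₀ hN1 hn
  -- separation
  have hsepN : ∀ μ < N, ∀ ν < N, μ ≠ ν → ε * cs * δ * (N : ℝ) ^ 2 ≤ ‖ξ μ - ξ ν‖ := by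
    intro μ hμ ν hν hne
    have h1 : t μ - t ν = ((μ : ℝ) - ν) * (δ / N) := by simp only [ht]; ring
    have h2 : (1 : ℝ) ≤ |(μ : ℝ) - ν| := by
      have : (1 : ℤ) ≤ |(μ : ℤ) - ν| := Int.one_le_abs (by omega)
      exact_mod_cast this
    have h3 : δ / N ≤ |t μ - t ν| := by
      rw [h1, abs_mul, abs_of_pos hh]
      nlinarith
    have h4 : |t μ - t ν| ≤ δs := by
      rw [abs_le]
      have := htm μ hμ
      have := htm ν hν
      constructor <;> linarith [(htm μ hμ).1, (htm μ hμ).2, (htm ν hν).1, (htm ν hν).2]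
    have h5 := hsep _ (htab μ hμ) _ (htab ν hν) h4
    have h6 : ‖ξ μ - ξ ν‖ = ε * (N : ℝ) ^ n * ‖e (t μ) - e (t ν)‖ := by
      simp only [hξ]
      rw [← smul_sub, norm_smul, Real.norm_of_nonneg (by positivity)]
    rw [h6]
    calc ε * cs * δ * (N : ℝ) ^ 2 = ε * ((N : ℝ) * N * N) * (cs * (δ / N)) := by field_simp
      _ ≤ ε * (N : ℝ) ^ n * (cs * |t μ - t ν|) := by gcongr
      _ ≤ _ := by gcongr
  have hexp : ∀ μ < N, ∀ ν < N, μ ≠ ν →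
      Real.exp (-(Real.pi / (4 * (N : ℝ) ^ 2) * ‖ξ μ - ξ ν‖ ^ 2)) ≤
      Real.exp (-(β * (N : ℝ) ^ 2)) := by
    intro μ hμ ν hν hne
    rw [Real.exp_le_exp, neg_le_neg_iff]
    calc β * (N : ℝ) ^ 2 = Real.pi / (4 * (N : ℝ) ^ 2) * (ε * cs * δ * (N : ℝ) ^ 2) ^ 2 := by
          rw [hβ]; field_simp
      _ ≤ _ := by
          have := hsepN μ hμ ν hν hne
          gcongr
  set G := Real.exp (-(β * (N : ℝ) ^ 2)) with hG
  have hG0 : 0 < G := Real.exp_pos _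
  -- dual side
  have hQ : ∑ μ ∈ Finset.range N, ∑ ν ∈ Finset.range N, Gw (N : ℝ) (ξ μ) (ξ ν) ≤
      (√(1 + C1) * (N : ℝ) ^ (1 / 2 : ℝ)) ^ 2 := by
    have h1 : ∀ μ < N, ∀ ν < N, μ ≠ ν → Gw (N : ℝ) (ξ μ) (ξ ν) ≤ G := by
      intro μ hμ ν hν hne
      refine le_trans ?_ (hexp ν hν μ hμ hne.symm)
      unfold Gw
      rw [Real.exp_le_exp, neg_le_neg_iff]
      gcongr
      nlinarith
    refine (sum_Gw_le N (N : ℝ) ξ G hG0.le h1).trans ?_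
    rw [mul_pow, Real.sq_sqrt (by positivity), ← Real.rpow_natCast, ← Real.rpow_mul hNr.le]
    have h2 := hp1 N hNr.le
    rw [← hG, pow_one] at h2
    rw [show (1 / 2 : ℝ) * ((2 : ℕ) : ℝ) = 1 by norm_num, Real.rpow_one, mul_comm (1 + C1)]
    exact mul_le_mul_of_nonneg_left (by nlinarith) hNr.le
  -- off-diagonal terms
  set O : ℝ := X * (1 + ε * (N : ℝ) ^ n * Ce) * (1 + N) * (2 ^ n * (N : ℝ) ^ n) * G with hO
  have hO0 : 0 ≤ O := by positivity
  have hoff : ∀ μ < N, ∀ ν < N, μ ≠ ν →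
      ‖(((1 : ℝ) : ℂ)) * PP N α γ χ (t ν) (ξ ν) (ξ μ)‖ ≤ O := by
    intro μ hμ ν hν hne
    rw [Complex.ofReal_one, one_mul]
    refine (PP_off (N : ℝ) hN1 α hα hα1 γ χ (t ν) (ξ ν) (ξ μ)).trans ?_
    have h1 := hexp ν hν μ hμ hne.symm
    have h2 : ‖ξ ν‖ ≤ ε * (N : ℝ) ^ n * Ce := by
      rw [hξn]
      have := (he _ (htab ν hν)).2
      gcongr
    rw [hO]
    gcongr
  have hOB : (N : ℝ) * N * O ≤ B := by
    have h2 := hp3 N hNr.le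
    rw [← hG] at h2
    have h3 : (1 : ℝ) ≤ (1 + (N : ℝ)) ^ n := one_le_pow₀ (by linarith)
    have h4 : (N : ℝ) ^ n ≤ (1 + (N : ℝ)) ^ n := pow_le_pow_left₀ hNr.le (by linarith) n
    have h5 : 1 + ε * (N : ℝ) ^ n * Ce ≤ (1 + ε * Ce) * (1 + (N : ℝ)) ^ n := by
      have : ε * (N : ℝ) ^ n * Ce ≤ ε * (1 + (N : ℝ)) ^ n * Ce := by gcongr
      nlinarith
    calc (N : ℝ) * N * O
        ≤ (1 + N) * (1 + N) * (X * ((1 + ε * Ce) * (1 + (N : ℝ)) ^ n) * (1 + N) *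
          (2 ^ n * (1 + (N : ℝ)) ^ n) * G) := by
          rw [hO]
          gcongr <;> linarith
      _ = X * (1 + ε * Ce) * 2 ^ n * ((1 + (N : ℝ)) ^ (2 * n + 3) * G) := by ring
      _ ≤ _ := by rw [hB]; gcongr
  -- diagonal terms
  set D : ℝ := (ε * ce * (N : ℝ) ^ n) ^ α * (gn * (cl / 4) * (N : ℝ) ^ (n - 1)) with hD
  have hn1 : (N : ℝ) ^ n = (N : ℝ) ^ (n - 1) * N := by
    rw [← pow_succ]; congr 1; omega
  have hn3 : (N : ℝ) * N ≤ (N : ℝ) ^ (n - 1) := by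
    calc (N : ℝ) * N = (N : ℝ) ^ 2 := by ring
      _ ≤ _ := pow_le_pow_right₀ hN1 (by omega)
  have hdiag : ∀ ν < N, D ≤ ((((1 : ℝ) : ℂ)) * PP N α γ χ (t ν) (ξ ν) (ξ ν)).re := by
    intro ν hν
    rw [Complex.ofReal_one, one_mul]
    have hcen := (he _ (htab ν hν)).1
    have hξlow : ε * ce * (N : ℝ) ^ n ≤ ‖ξ ν‖ := by
      rw [hξn]
      calc ε * ce * (N : ℝ) ^ n = ε * (N : ℝ) ^ n * ce := by ring
        _ ≤ _ := by gcongr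
    have hξpos : 0 < ‖ξ ν‖ := lt_of_lt_of_le (by positivity) hξlow
    have h1 := PP_diag_error (N : ℝ) hNr α hα hα1 γ hγ χ hχ hχc (t ν) (ξ ν) (norm_pos_iff.1 hξpos)
    have h2 := hzero N hNr ε hε0 (t ν) (htab ν hν)
    have h3 : cl / N ≤ II N γ χ (t ν) :=
      hlo N hN1 (t ν) ⟨(htm ν hν).1, by linarith [(htm ν hν).2]⟩
    have hw := rpow_le_ww α hα (ε * ce * (N : ℝ) ^ n) (by positivity) (ξ ν) hξlow
    set W := ww α (ξ ν) with hW
    have hW0 : 0 < W := ww_pos _ _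
    have h4 : gn * (cl / 2) * (N : ℝ) ^ (n - 1) ≤ (PP N 0 γ χ (t ν) (ξ ν) (ξ ν)).re := by
      refine le_trans ?_ h2
      calc gn * (cl / 2) * (N : ℝ) ^ (n - 1) = gn * (N : ℝ) ^ n * (cl / N - ε * (Cz / N)) := by
            rw [mul_div_assoc' ε Cz, hεC, hn1]; field_simp; ring
        _ ≤ _ := by gcongr
    have h5 : X * ((N : ℝ) ^ (n + 1) / ‖ξ ν‖) ≤ gn * (cl / 4) * (N : ℝ) ^ (n - 1) := by
      calc X * ((N : ℝ) ^ (n + 1) / ‖ξ ν‖) ≤ X * ((N : ℝ) ^ (n + 1) / (ε * ce * (N : ℝ) ^ n)) := by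
            gcongr
        _ = X * N / (ε * ce) := by rw [pow_succ]; field_simp
        _ ≤ gn * (cl / 4) * (N * N) := by
            rw [div_le_iff₀ (by positivity)]
            nlinarith
        _ ≤ _ := by gcongr
    have h6 := neg_le_of_abs_le ((Complex.abs_re_le_norm _).trans h1)
    rw [Complex.sub_re, Complex.re_ofReal_mul] at h6
    have h7 : X * W * ((N : ℝ) ^ (n + 1) / ‖ξ ν‖) ≤ W * (gn * (cl / 4) * (N : ℝ) ^ (n - 1)) := by
      calc _ = W * (X * ((N : ℝ) ^ (n + 1) / ‖ξ ν‖)) := by ring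
        _ ≤ _ := by gcongr
    have h8 : W * (gn * (cl / 2) * (N : ℝ) ^ (n - 1)) ≤
        W * (PP N 0 γ χ (t ν) (ξ ν) (ξ ν)).re := by gcongr
    have h9 : D ≤ W * (gn * (cl / 4) * (N : ℝ) ^ (n - 1)) := by rw [hD]; gcongr
    linarith
  have hmain := hkey N hN s₀ htab (fun _ => 1) (fun _ => by simp) ξ ξ N
    (√(1 + C1) * (N : ℝ) ^ (1 / 2 : ℝ)) (by positivity) hQ
  have hlow := sum_diag_off N (fun μ ν => (((1 : ℝ) : ℂ)) * PP N α γ χ (t ν) (ξ ν) (ξ μ)) D O hO0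
    hdiag hoff
  have hND : N * D = c * (N : ℝ) ^ ((n : ℝ) + n * α) := by
    rw [hD, hc, Real.mul_rpow (by positivity) hNp.le, Real.rpow_add hNr, Real.rpow_mul hNr.le,
      Real.rpow_natCast, hn1]
    ring
  have hbig : (N : ℝ) ≤ (N : ℝ) ^ ((n : ℝ) + n * α) := by
    have h1 : (1 : ℝ) ≤ n := by exact_mod_cast (by omega : 1 ≤ n)
    calc (N : ℝ) = (N : ℝ) ^ (1 : ℝ) := (Real.rpow_one _).symm
      _ ≤ _ := Real.rpow_le_rpow_of_exponent_le hN1 (by nlinarith [mul_nonneg (zero_le_one.trans h1) hα])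
  have hfin : c / 2 * (N : ℝ) ^ ((n : ℝ) + n * α) ≤ N * D - N * N * O := by
    rw [hND]
    have : N * c ≤ (N : ℝ) ^ ((n : ℝ) + n * α) * c := by gcongr
    linarith
  calc _ ≤ _ := hfin
    _ ≤ _ := hlow
    _ ≤ _ := hmain
    _ = _ := by
      rw [show (n : ℝ) + (1 / 2 + q) = ((n : ℝ) + q) + 1 / 2 by ring, Real.rpow_add hNr _ (1 / 2)]
      ring

/-- necessary conditions for `L^p → L^p_α` boundedness of the averaging
operator over a non-degenerate curve: `α ≤ min{(1/n)(1/2 + 1/p), 1/p}`. -/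
theorem statement1
    (n : ℕ) (hn : 2 ≤ n)
    (p : ℝ≥0∞) (hp : 2 ≤ p)
    (α : ℝ) (hα : 0 ≤ α)
    (a b : ℝ) (hab : a < b)
    (γ : ℝ → Euc n) (hγ : ContDiff ℝ (⊤ : ℕ∞) γ)
    (hinj : Set.InjOn γ (Set.Icc a b))
    (hreg : ∀ s ∈ Set.Icc a b, deriv γ s ≠ 0)
    (hnd : NonDeg γ (Set.Icc a b))
    (χ : ℝ → ℝ) (hχ : ContDiff ℝ (⊤ : ℕ∞) χ) (hχc : HasCompactSupport χ)
    (hχs : tsupport χ ⊆ Set.Ioo a b)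
    (hχpos : ∀ s, 0 ≤ χ s) (hχne : χ ≠ 0)
    (hbdd : ∃ C : ℝ, ∀ f : SchwartzMap (Euc n) ℂ,
      sobolevNorm p α (avgOp γ χ ⇑f) ≤ ENNReal.ofReal C * eLpNorm (⇑f) p volume) :
    α ≤ min ((1 / (n : ℝ)) * (1 / 2 + (1 / p).toReal)) (1 / p).toReal := by
  have h1 := cond_one hn p hp α hα a b hab γ hγ hinj hreg χ hχ.continuous hχc hχs hχpos hχne hbdd
  have hq : (1 / p).toReal ≤ 1 / 2 := by
    have h : 1 / p ≤ 1 / 2 := ENNReal.div_le_div_left hp 1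
    calc (1 / p).toReal ≤ ((1 : ℝ≥0∞) / 2).toReal := ENNReal.toReal_mono (by simp) h
      _ = 1 / 2 := by simp
  refine le_min ?_ h1
  rcases hn.eq_or_lt with h2 | h3
  · subst h2
    push_cast
    linarith
  · have h4 := cond_two h3 p hp α hα (by linarith) a b hab γ hγ hinj hreg hnd χ hχ.continuous hχc
      hχs hχpos hχne hbdd
    have hn0 : (0 : ℝ) < n := by exact_mod_cast (by omega : 0 < n)
    rw [one_div_mul_eq_div, le_div_iff₀ hn0]
    linarith
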